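/- arXiv:math/0308007 — 3 statements merged into one kernel-verified Lean document; each statement's English description precedes it below -/
import Mathlib

section
/- Let (Ω_k, 𝒜_k, μ_k) and (Ω_k, 𝒜_k, ν_k) be probability spaces on finite sets Ω_k with μ_k(i) = p_{ik} ≥ 0 and ν_k(i) = q_{ik} > 0, and let μ = ⊗_k μ_k, ν = ⊗_k ν_k be the infinite product measures on Ω = ∏_k Ω_k. Then μ is absolutely continuous with respect to ν if and only if ∏_{k=1}^∞ (∑_{i ∈ Ω_k} √(p_{ik} q_{ik})) > 0, and μ ⊥ ν if and only if this product equals 0. -/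
open MeasureTheory Filter Finset Topology

namespace KakAux

/-- Restriction to the first `m` coordinates. -/
def res (N : ℕ → ℕ) (m : ℕ) (x : (k : ℕ) → Fin (N k + 1)) : (k : Fin m) → Fin (N k + 1) :=
  fun k => x k

lemma measurable_res (N : ℕ → ℕ) (m : ℕ) : Measurable (res N m) :=
  measurable_pi_lambda _ fun k => measurable_pi_apply (k : ℕ)

lemma meas_res (N : ℕ → ℕ) (p : (k : ℕ) → Fin (N k + 1) → ℝ)
    (μ : Measure ((k : ℕ) → Fin (N k + 1)))
    (hp : ∀ k i, 0 ≤ p k i)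
    (hμ : ∀ (n : ℕ) (ω : (k : ℕ) → Fin (N k + 1)),
      μ {x | ∀ k < n, x k = ω k} = ENNReal.ofReal (∏ k ∈ Finset.range n, p k (ω k)))
    (m : ℕ) (S : Finset ((k : Fin m) → Fin (N k + 1))) :
    μ (res N m ⁻¹' (S : Set _)) = ENNReal.ofReal (∑ w ∈ S, ∏ k : Fin m, p k (w k)) := by
  rw [← sum_measure_preimage_singleton S (fun y _ => measurable_res N m (measurableSet_singleton y)),
    ENNReal.ofReal_sum_of_nonneg (fun w _ => Finset.prod_nonneg fun k _ => hp _ _)]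
  refine Finset.sum_congr rfl fun w _ => ?_
  let ω : (k : ℕ) → Fin (N k + 1) := fun k => if h : k < m then w ⟨k, h⟩ else 0
  have h := hμ m ω
  have e1 : {x : (k : ℕ) → Fin (N k + 1) | ∀ k < m, x k = ω k} = res N m ⁻¹' {w} := by
    ext x
    simp only [Set.mem_setOf_eq, Set.mem_preimage, Set.mem_singleton_iff]
    constructor
    · intro hx
      funext k
      have := hx k k.2
      simpa [ω, res] using this
    · rintro rfl k hk
      simp [ω, res, hk]
  rw [e1] at h
  rw [h, ← Fin.prod_univ_eq_prod_range (fun k => p k (ω k)) m]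
  congr 1
  refine Finset.prod_congr rfl fun k _ => ?_
  simp [ω]

lemma sum_words (N : ℕ → ℕ) (f : (k : ℕ) → Fin (N k + 1) → ℝ) (m : ℕ) :
    ∑ w : ((k : Fin m) → Fin (N k + 1)), ∏ k : Fin m, f k (w k)
      = ∏ k ∈ Finset.range m, ∑ i, f k i := by
  rw [← Fin.prod_univ_eq_prod_range (fun k => ∑ i, f k i) m, Finset.prod_univ_sum]
  simp

lemma sqrt_words (N : ℕ → ℕ) (p q : (k : ℕ) → Fin (N k + 1) → ℝ)
    (hp : ∀ k i, 0 ≤ p k i) (hq : ∀ k i, 0 ≤ q k i) (m : ℕ)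
    (w : (k : Fin m) → Fin (N k + 1)) :
    ∏ k : Fin m, Real.sqrt (p k (w k) * q k (w k)) =
      Real.sqrt ((∏ k : Fin m, p k (w k)) * ∏ k : Fin m, q k (w k)) := by
  rw [← Finset.prod_mul_distrib, Real.sqrt_prod _ (fun k _ => mul_nonneg (hp _ _) (hq _ _))]

lemma aff_le_one {ι : Type*} [Fintype ι] (p q : ι → ℝ) (hp : ∀ i, 0 ≤ p i) (hq : ∀ i, 0 ≤ q i)
    (hps : ∑ i, p i = 1) (hqs : ∑ i, q i = 1) : ∑ i, Real.sqrt (p i * q i) ≤ 1 := by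
  have : ∑ i, Real.sqrt (p i * q i) ≤ ∑ i, (p i + q i) / 2 := by
    refine Finset.sum_le_sum fun i _ => ?_
    have h := hp i
    have h' := hq i
    refine Real.sqrt_le_iff.2 ⟨by positivity, ?_⟩
    nlinarith [sq_nonneg (p i - q i)]
  rw [← Finset.sum_div, Finset.sum_add_distrib, hps, hqs] at this
  linarith

/-- Vanishing product: mutual singularity. -/
lemma singular (N : ℕ → ℕ) (p q : (k : ℕ) → Fin (N k + 1) → ℝ)
    (μ ν : Measure ((k : ℕ) → Fin (N k + 1)))
    (hp : ∀ k i, 0 ≤ p k i) (hq : ∀ k i, 0 < q k i)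
    (hμ : ∀ (n : ℕ) (ω : (k : ℕ) → Fin (N k + 1)),
      μ {x | ∀ k < n, x k = ω k} = ENNReal.ofReal (∏ k ∈ Finset.range n, p k (ω k)))
    (hν : ∀ (n : ℕ) (ω : (k : ℕ) → Fin (N k + 1)),
      ν {x | ∀ k < n, x k = ω k} = ENNReal.ofReal (∏ k ∈ Finset.range n, q k (ω k)))
    (h0 : Tendsto (fun n => ∏ k ∈ Finset.range n, ∑ i, Real.sqrt (p k i * q k i))
        atTop (nhds 0)) : μ.MutuallySingular ν := by
  classical
  have hq' : ∀ k i, 0 ≤ q k i := fun k i => (hq k i).le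
  have key : ∀ j : ℕ, ∃ A : Set ((k : ℕ) → Fin (N k + 1)), MeasurableSet A ∧
      ν A ≤ ENNReal.ofReal ((1 / 2) ^ j) ∧ μ Aᶜ ≤ ENNReal.ofReal ((1 / 2) ^ j) := by
    intro j
    obtain ⟨m, hm⟩ := (h0.eventually_lt_const (show (0 : ℝ) < (1 / 2) ^ j by positivity)).exists
    have hs := sum_words N (fun k i => Real.sqrt (p k i * q k i)) m
    simp only [sqrt_words N p q hp hq'] at hs
    let S : Finset ((k : Fin m) → Fin (N k + 1)) :=
      Finset.univ.filter fun w => ∏ k : Fin m, q k (w k) ≤ ∏ k : Fin m, p k (w k)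
    have pn : ∀ w : ((k : Fin m) → Fin (N k + 1)), 0 ≤ ∏ k : Fin m, p k (w k) :=
      fun w => Finset.prod_nonneg fun k _ => hp _ _
    have qn : ∀ w : ((k : Fin m) → Fin (N k + 1)), 0 ≤ ∏ k : Fin m, q k (w k) :=
      fun w => Finset.prod_nonneg fun k _ => hq' _ _
    refine ⟨res N m ⁻¹' (S : Set _), measurable_res N m (Finset.measurableSet S), ?_, ?_⟩
    · rw [meas_res N q ν hq' hν]
      refine ENNReal.ofReal_le_ofReal (le_trans ?_ hm.le)
      rw [← hs]
      refine le_trans (Finset.sum_le_sum fun w hw => ?_)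
        (Finset.sum_le_univ_sum_of_nonneg fun w => Real.sqrt_nonneg _)
      have hw' := (Finset.mem_filter.1 hw).2
      exact Real.le_sqrt_of_sq_le (by nlinarith [qn w])
    · rw [← Set.preimage_compl, ← Finset.coe_compl, meas_res N p μ hp hμ]
      refine ENNReal.ofReal_le_ofReal (le_trans ?_ hm.le)
      rw [← hs]
      refine le_trans (Finset.sum_le_sum fun w hw => ?_)
        (Finset.sum_le_univ_sum_of_nonneg fun w => Real.sqrt_nonneg _)
      have hw' : ∏ k : Fin m, p k (w k) < ∏ k : Fin m, q k (w k) := by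
        simpa [S] using hw
      exact Real.le_sqrt_of_sq_le (by nlinarith [pn w])
  choose A hA hνA hμA using key
  have hsum : ∑' j : ℕ, ENNReal.ofReal ((1 / 2) ^ j) ≠ ⊤ :=
    (summable_geometric_two).tsum_ofReal_ne_top
  have h1 : ν (limsup A atTop) = 0 :=
    measure_limsup_atTop_eq_zero (ne_top_of_le_ne_top hsum (ENNReal.tsum_le_tsum hνA))
  have h2 : μ (limsup (fun j => (A j)ᶜ) atTop) = 0 :=
    measure_limsup_atTop_eq_zero (ne_top_of_le_ne_top hsum (ENNReal.tsum_le_tsum hμA))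
  refine ⟨(limsup A atTop)ᶜ, (MeasurableSet.measurableSet_limsup hA).compl, ?_, ?_⟩
  · refine measure_mono_null (fun x hx => ?_) h2
    rw [Set.mem_compl_iff, mem_limsup_iff_frequently_mem, Filter.not_frequently] at hx
    rw [mem_limsup_iff_frequently_mem]
    exact hx.frequently
  · rwa [compl_compl]

/-- Uniform bound on cylinder sets. -/
lemma cyl_bound (N : ℕ → ℕ) (p q : (k : ℕ) → Fin (N k + 1) → ℝ)
    (μ ν : Measure ((k : ℕ) → Fin (N k + 1)))
    (hp : ∀ k i, 0 ≤ p k i) (hq : ∀ k i, 0 < q k i)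
    (hps : ∀ k, ∑ i, p k i = 1) (hqs : ∀ k, ∑ i, q k i = 1)
    (hμ : ∀ (n : ℕ) (ω : (k : ℕ) → Fin (N k + 1)),
      μ {x | ∀ k < n, x k = ω k} = ENNReal.ofReal (∏ k ∈ Finset.range n, p k (ω k)))
    (hν : ∀ (n : ℕ) (ω : (k : ℕ) → Fin (N k + 1)),
      ν {x | ∀ k < n, x k = ω k} = ENNReal.ofReal (∏ k ∈ Finset.range n, q k (ω k)))
    (P : ℕ → ℝ) (hP : P = fun n => ∏ k ∈ Finset.range n, ∑ i, Real.sqrt (p k i * q k i))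
    (hanti : Antitone P) (c : ℝ) (hc : 0 < c) (hcP : ∀ n, c ≤ P n) (ε : ℝ) (hε : 0 < ε) :
    ∃ n : ℕ, ∃ C : ℝ, 0 ≤ C ∧ ∀ m, n ≤ m → ∀ S : Finset ((k : Fin m) → Fin (N k + 1)),
      μ (res N m ⁻¹' (S : Set _)) ≤
        ENNReal.ofReal C * ν (res N m ⁻¹' (S : Set _)) + ENNReal.ofReal (4 * ε) := by
  classical
  have hq' : ∀ k i, 0 ≤ q k i := fun k i => (hq k i).le
  -- choice of n
  have hbdd : BddBelow (Set.range P) := ⟨c, by rintro _ ⟨n, rfl⟩; exact hcP n⟩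
  have hlim := tendsto_atTop_ciInf hanti hbdd
  obtain ⟨n, hn⟩ := (hlim.eventually_lt_const
    (show (⨅ i, P i) < (⨅ i, P i) + c * ε by linarith [mul_pos hc hε])).exists
  have hPm : ∀ m, P n - P m ≤ c * ε := fun m => by
    have := ciInf_le hbdd m
    linarith
  let r : (k : ℕ) → Fin (N k + 1) → ℝ := fun k i => if k < n then p k i else q k i
  have hr : ∀ k i, 0 ≤ r k i := fun k i => by
    simp only [r]; split_ifs
    · exact hp k i
    · exact hq' k i
  have hrs : ∀ k, ∑ i, r k i = 1 := fun k => by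
    simp only [r]; split_ifs
    · exact hps k
    · exact hqs k
  let d : ℕ → ℝ := fun k => ∑ i, (q k i)⁻¹
  have hd0 : ∀ k, 0 ≤ d k := fun k => Finset.sum_nonneg fun i _ => inv_nonneg.2 (hq' k i)
  have hd : ∀ k i, p k i ≤ d k * q k i := fun k i => by
    have h1 : p k i ≤ 1 := by
      rw [← hps k]; exact Finset.single_le_sum (fun j _ => hp k j) (Finset.mem_univ i)
    have h2 : (q k i)⁻¹ ≤ d k :=
      Finset.single_le_sum (f := fun j => (q k j)⁻¹)
        (fun j _ => inv_nonneg.2 (hq' k j)) (Finset.mem_univ i)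
    have h3 := mul_le_mul_of_nonneg_right h2 (hq' k i)
    rw [inv_mul_cancel₀ (hq k i).ne'] at h3
    linarith
  have hD : 0 ≤ ∏ k ∈ Finset.range n, d k := Finset.prod_nonneg fun k _ => hd0 k
  refine ⟨n, 2 * ∏ k ∈ Finset.range n, d k, by positivity, ?_⟩
  intro m hnm S
  -- Hellinger affinity of p and r
  have hH : (∏ k ∈ Finset.range m, ∑ i, Real.sqrt (p k i * r k i)) * P n = P m := by
    induction m, hnm using Nat.le_induction with
    | base =>
      rw [Finset.prod_eq_one, one_mul]
      intro k hk
      rw [← hps k]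
      refine Finset.sum_congr rfl fun i _ => ?_
      simp only [r, if_pos (Finset.mem_range.1 hk)]
      exact Real.sqrt_mul_self (hp k i)
    | succ m hm ih =>
      have h1 : P (m + 1) = P m * ∑ i, Real.sqrt (p m i * q m i) := by
        rw [hP]; exact Finset.prod_range_succ _ _
      rw [Finset.prod_range_succ, h1, ← ih ∅]
      simp only [r, if_neg (not_lt.2 hm)]
      ring
  set H := ∏ k ∈ Finset.range m, ∑ i, Real.sqrt (p k i * r k i) with hHdef
  have hH1 : 1 - H ≤ ε := by
    by_contra hcon
    push Not at hcon
    have h1 := hPm m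
    have h2 : c * ε < P n * (1 - H) := by
      have := hcP n
      calc c * ε < c * (1 - H) := by nlinarith
        _ ≤ P n * (1 - H) := by nlinarith
    nlinarith
  let a : ((k : Fin m) → Fin (N k + 1)) → ℝ := fun w => ∏ k : Fin m, p k (w k)
  let b : ((k : Fin m) → Fin (N k + 1)) → ℝ := fun w => ∏ k : Fin m, r k (w k)
  have ha : ∀ w, 0 ≤ a w := fun w => Finset.prod_nonneg fun k _ => hp _ _
  have hb : ∀ w, 0 ≤ b w := fun w => Finset.prod_nonneg fun k _ => hr _ _
  have hsa : ∑ w, a w = 1 := by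
    rw [sum_words N p m]; simp [hps]
  have hsb : ∑ w, b w = 1 := by
    rw [sum_words N r m]; simp [hrs]
  have hsab : ∑ w, Real.sqrt (a w * b w) = H := by
    rw [hHdef, ← sum_words N (fun k i => Real.sqrt (p k i * r k i)) m]
    exact Finset.sum_congr rfl fun w _ => (sqrt_words N p r hp hr m w).symm
  have hbq : ∀ w, b w ≤ (∏ k ∈ Finset.range n, d k) * ∏ k : Fin m, q k (w k) := by
    intro w
    have e : ∏ k ∈ Finset.range n, d k = ∏ k : Fin m, if (k : ℕ) < n then d k else 1 := by
      rw [Fin.prod_univ_eq_prod_range (fun k => if k < n then d k else 1) m,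
        ← Finset.prod_subset (Finset.range_mono hnm) (f := fun k => if k < n then d k else 1)]
      · exact Finset.prod_congr rfl fun k hk => by simp [Finset.mem_range.1 hk]
      · intro k _ hk
        simp only [Finset.mem_range] at hk
        simp [hk]
    rw [e, ← Finset.prod_mul_distrib]
    refine Finset.prod_le_prod (fun k _ => hr _ _) fun k _ => ?_
    simp only [r]
    split_ifs
    · exact hd _ _
    · simp
  have hpt : ∀ w, a w ≤ 2 * b w + 2 * (a w + b w - 2 * Real.sqrt (a w * b w)) := by
    intro w
    rw [Real.sqrt_mul (ha w)]
    nlinarith [Real.sq_sqrt (ha w), Real.sq_sqrt (hb w),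
      sq_nonneg (Real.sqrt (a w) - 2 * Real.sqrt (b w))]
  have hpos : ∀ w, 0 ≤ 2 * (a w + b w - 2 * Real.sqrt (a w * b w)) := by
    intro w
    rw [Real.sqrt_mul (ha w)]
    nlinarith [Real.sq_sqrt (ha w), Real.sq_sqrt (hb w),
      sq_nonneg (Real.sqrt (a w) - Real.sqrt (b w))]
  have htot : ∑ w, 2 * (a w + b w - 2 * Real.sqrt (a w * b w)) ≤ 4 * ε := by
    rw [← Finset.mul_sum, Finset.sum_sub_distrib, Finset.sum_add_distrib, ← Finset.mul_sum,
      hsa, hsb, hsab]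
    linarith
  have hfin : ∑ w ∈ S, a w ≤
      (2 * ∏ k ∈ Finset.range n, d k) * (∑ w ∈ S, ∏ k : Fin m, q k (w k)) + 4 * ε := by
    calc ∑ w ∈ S, a w ≤ ∑ w ∈ S, (2 * b w + 2 * (a w + b w - 2 * Real.sqrt (a w * b w))) :=
          Finset.sum_le_sum fun w _ => hpt w
      _ = ∑ w ∈ S, 2 * b w + ∑ w ∈ S, 2 * (a w + b w - 2 * Real.sqrt (a w * b w)) :=
          Finset.sum_add_distrib
      _ ≤ _ := by
          refine add_le_add ?_ (le_trans (Finset.sum_le_univ_sum_of_nonneg hpos) htot)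
          rw [Finset.mul_sum]
          exact Finset.sum_le_sum fun w _ => by linarith [hbq w]
  have hqn : 0 ≤ ∑ w ∈ S, ∏ k : Fin m, q k (w k) :=
    Finset.sum_nonneg fun w _ => Finset.prod_nonneg fun k _ => hq' _ _
  rw [meas_res N p μ hp hμ, meas_res N q ν hq' hν, ← ENNReal.ofReal_mul (by positivity),
    ← ENNReal.ofReal_add (by positivity) (by positivity)]
  exact ENNReal.ofReal_le_ofReal hfin

lemma ac_of_bound (N : ℕ → ℕ) (μ ν : Measure ((k : ℕ) → Fin (N k + 1)))
    [IsFiniteMeasure ν]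
    (h : ∀ ε : ℝ, 0 < ε → ∃ n : ℕ, ∃ C : ℝ, 0 ≤ C ∧ ∀ m, n ≤ m →
      ∀ S : Finset ((k : Fin m) → Fin (N k + 1)),
      μ (res N m ⁻¹' (S : Set _)) ≤
        ENNReal.ofReal C * ν (res N m ⁻¹' (S : Set _)) + ENNReal.ofReal (4 * ε)) :
    μ ≪ ν := by
  classical
  intro A hA
  refine le_antisymm (ENNReal.le_of_forall_pos_le_add fun ε hε _ => ?_) (zero_le)
  obtain ⟨n, C, hC, hb⟩ := h (ε / 8) (by positivity)
  obtain ⟨δ, hδ, hCδ⟩ : ∃ δ : ℝ, 0 < δ ∧ C * δ ≤ ε / 2 :=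
    ⟨ε / 2 / (C + 1), by positivity, by
      rw [mul_div_assoc', div_le_iff₀ (by positivity)]
      have : (0 : ℝ) < ε := hε
      nlinarith⟩
  obtain ⟨U, hAU, hU, hνU⟩ := A.exists_isOpen_lt_of_lt (μ := ν) (ENNReal.ofReal δ)
    (by rw [hA]; exact ENNReal.ofReal_pos.2 hδ)
  let B : ℕ → Set ((k : ℕ) → Fin (N k + 1)) := fun m => {x | ∀ y, res N m y = res N m x → y ∈ U}
  have hBmono : Monotone B := by
    intro m m' hmm x hx y hy
    refine hx y ?_
    funext k
    exact congrFun hy ⟨k, lt_of_lt_of_le k.2 hmm⟩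
  have hBU : ∀ m, B m ⊆ U := fun m x hx => hx x rfl
  have hBun : ⋃ m, B m = U := by
    refine Set.Subset.antisymm (Set.iUnion_subset hBU) fun x hx => ?_
    obtain ⟨s, ⟨z, m, rfl⟩, hxs, hsU⟩ :=
      (PiNat.isTopologicalBasis_cylinders (fun k => Fin (N k + 1))).exists_subset_of_mem_open hx hU
    refine Set.mem_iUnion.2 ⟨m, fun y hy => hsU ?_⟩
    rw [PiNat.mem_cylinder_iff] at hxs ⊢
    intro i hi
    rw [← hxs i hi]
    exact congrFun hy ⟨i, hi⟩
  have hBS : ∀ m, B m = res N m ⁻¹' ((Finset.univ.filter fun w => ∀ y, res N m y = w → y ∈ U :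
      Finset ((k : Fin m) → Fin (N k + 1))) : Set _) := by
    intro m; ext x; simp [B]
  have hmu : μ U ≤ ENNReal.ofReal ε := by
    have ht := tendsto_measure_iUnion_atTop (μ := μ) hBmono
    rw [hBun] at ht
    refine le_of_tendsto ht (eventually_atTop.2 ⟨n, fun m hm => ?_⟩)
    have h1 := hb m hm (Finset.univ.filter fun w => ∀ y, res N m y = w → y ∈ U)
    rw [← hBS m] at h1
    refine h1.trans ?_
    calc ENNReal.ofReal C * ν (B m) + ENNReal.ofReal (4 * (ε / 8))
        ≤ ENNReal.ofReal C * ENNReal.ofReal δ + ENNReal.ofReal (4 * (ε / 8)) := by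
          gcongr
          exact (measure_mono (hBU m)).trans hνU.le
      _ = ENNReal.ofReal (C * δ + 4 * (ε / 8)) := by
          rw [← ENNReal.ofReal_mul hC, ← ENNReal.ofReal_add (by positivity) (by positivity)]
      _ ≤ ENNReal.ofReal ε := ENNReal.ofReal_le_ofReal (by linarith)
  rw [zero_add]
  refine (measure_mono hAU).trans (hmu.trans ?_)
  simp

end KakAux

/-- Kakutani's dichotomy for infinite products of discrete probability measures on
a countable product of finite sets.  `μ` and `ν` are the infinite product measures
with marginals `μ_k(i) = p_{ik} ≥ 0` and `ν_k(i) = q_{ik} > 0` (characterized by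
their values on cylinders).  Then `μ ≪ ν` iff the infinite product of the Hellinger
affinities `∑_i √(p_{ik} q_{ik})` is positive (i.e. the nonincreasing partial products
are bounded below by a positive constant), and `μ ⊥ ν` iff this product equals `0`. -/
theorem kakutani_dichotomy (N : ℕ → ℕ) (p q : (k : ℕ) → Fin (N k + 1) → ℝ)
    (μ ν : Measure ((k : ℕ) → Fin (N k + 1)))
    [IsProbabilityMeasure μ] [IsProbabilityMeasure ν]
    (hp : ∀ k i, 0 ≤ p k i) (hq : ∀ k i, 0 < q k i)
    (hps : ∀ k, ∑ i, p k i = 1) (hqs : ∀ k, ∑ i, q k i = 1)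
    (hμ : ∀ (n : ℕ) (ω : (k : ℕ) → Fin (N k + 1)),
      μ {x | ∀ k < n, x k = ω k} = ENNReal.ofReal (∏ k ∈ Finset.range n, p k (ω k)))
    (hν : ∀ (n : ℕ) (ω : (k : ℕ) → Fin (N k + 1)),
      ν {x | ∀ k < n, x k = ω k} = ENNReal.ofReal (∏ k ∈ Finset.range n, q k (ω k))) :
    (μ ≪ ν ↔ ∃ c > 0, ∀ n, c ≤ ∏ k ∈ Finset.range n, ∑ i, Real.sqrt (p k i * q k i)) ∧
    (μ.MutuallySingular ν ↔
      Tendsto (fun n => ∏ k ∈ Finset.range n, ∑ i, Real.sqrt (p k i * q k i))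
        atTop (nhds 0)) := by
  have hq' : ∀ k i, 0 ≤ q k i := fun k i => (hq k i).le
  set P : ℕ → ℝ := fun n => ∏ k ∈ Finset.range n, ∑ i, Real.sqrt (p k i * q k i) with hP
  have hP0 : ∀ n, 0 ≤ P n := fun n =>
    Finset.prod_nonneg fun k _ => Finset.sum_nonneg fun i _ => Real.sqrt_nonneg _
  have hanti : Antitone P := antitone_nat_of_succ_le fun n => by
    have h1 : P (n + 1) = P n * ∑ i, Real.sqrt (p n i * q n i) := Finset.prod_range_succ _ _
    rw [h1]
    exact mul_le_of_le_one_right (hP0 n)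
      (KakAux.aff_le_one _ _ (hp n) (hq' n) (hps n) (hqs n))
  have hB : (∃ c > 0, ∀ n, c ≤ P n) → μ ≪ ν := by
    rintro ⟨c, hc, hcP⟩
    exact KakAux.ac_of_bound N μ ν
      (KakAux.cyl_bound N p q μ ν hp hq hps hqs hμ hν P hP hanti c hc hcP)
  have hA : Tendsto P atTop (nhds 0) → μ.MutuallySingular ν :=
    KakAux.singular N p q μ ν hp hq hμ hν
  have hdich : (¬ ∃ c > 0, ∀ n, c ≤ P n) → Tendsto P atTop (nhds 0) := by
    intro h
    push Not at h
    refine tendsto_order.2 ⟨fun a ha => Eventually.of_forall fun n => lt_of_lt_of_le ha (hP0 n),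
      fun a ha => ?_⟩
    obtain ⟨n, hn⟩ := h a ha
    exact eventually_atTop.2 ⟨n, fun m hm => lt_of_le_of_lt (hanti hm) hn⟩
  have hnot : μ ≪ ν → ¬ μ.MutuallySingular ν := fun hac hs => by
    have := Measure.eq_zero_of_absolutelyContinuous_of_mutuallySingular hac hs
    exact IsProbabilityMeasure.ne_zero μ this
  refine ⟨⟨fun hac => ?_, hB⟩, ⟨fun hs => ?_, hA⟩⟩
  · by_contra hcon
    exact hnot hac (hA (hdich hcon))
  · by_contra hcon
    exact hnot (hB (by_contra fun h => hcon (hdich h))) hs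
end

section
/- Let ξ = Δ_{ξ_1 ξ_2 ...} be the random variable with independent Q̃-symbols, where ξ_k are independent with P(ξ_k = i) = p_{ik}. Then the distribution μ_ξ on [0,1] is of pure type: it is either purely absolutely continuous, purely atomic, or purely singular continuous. Moreover: μ_ξ is purely absolutely continuous iff ∏_{k=1}^∞ ∑_{i} √(p_{ik} q_{ik}) > 0; purely atomic iff ∏_{k=1}^∞ max_i p_{ik} > 0; and purely singular continuous iff both products are 0. -/
open MeasureTheory Filter Finset Topology

/-- The coding map of the `Q̃`-representation: it sends a digit sequence
`ω`, with `k`-th digit in `{0, 1, ..., N k}`, to the point of `[0,1]` given by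
formula (5) of the paper: `x = ∑_k D_k(x) L_{k-1}(x)`, i.e. the unique point in
the intersection of the nested cylinder intervals `Δ_{ω₁...ω_k}`. -/
noncomputable def codingMap (N : ℕ → ℕ) (q : (k : ℕ) → Fin (N k + 1) → ℝ)
    (ω : (k : ℕ) → Fin (N k + 1)) : ℝ :=
  ∑' k : ℕ, (∑ j : Fin (N k + 1), if (j : ℕ) < (ω k : ℕ) then q k j else 0) *
    ∏ s ∈ Finset.range k, q s (ω s)

/-- `Γ_{Q̃(V)}`: the set of points of `[0,1]` admitting a `Q̃`-representation
whose `k`-th digit lies in `V k` for every `k`. -/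
noncomputable def QtSet (N : ℕ → ℕ) (q : (k : ℕ) → Fin (N k + 1) → ℝ)
    (V : (k : ℕ) → Finset (Fin (N k + 1))) : Set ℝ :=
  codingMap N q '' {ω | ∀ k, ω k ∈ V k}

/-- product weight of the first `n` digits -/
noncomputable def wP {N : ℕ → ℕ} (f : (k : ℕ) → Fin (N k + 1) → ℝ) (n : ℕ)
    (ω : (k : ℕ) → Fin (N k + 1)) : ℝ := ∏ k ∈ Finset.range n, f k (ω k)

/-- cumulative sums -/
noncomputable def cD {N : ℕ → ℕ} (q : (k : ℕ) → Fin (N k + 1) → ℝ) (k : ℕ)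
    (i : Fin (N k + 1)) : ℝ :=
  ∑ j : Fin (N k + 1), if (j : ℕ) < (i : ℕ) then q k j else 0

/-- left endpoints -/
noncomputable def lE {N : ℕ → ℕ} (q : (k : ℕ) → Fin (N k + 1) → ℝ) (n : ℕ)
    (ω : (k : ℕ) → Fin (N k + 1)) : ℝ :=
  ∑ k ∈ Finset.range n, cD q k (ω k) * wP q k ω

/-- finite words -/
abbrev Wd (N : ℕ → ℕ) (n : ℕ) : Type := (k : Fin n) → Fin (N k + 1)

/-- extension of a word by zeros -/
def wext {N : ℕ → ℕ} {n : ℕ} (w : Wd N n) : (k : ℕ) → Fin (N k + 1) :=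
  fun k => if h : k < n then w ⟨k, h⟩ else 0

/-- restriction -/
def wres {N : ℕ → ℕ} (n : ℕ) (ω : (k : ℕ) → Fin (N k + 1)) : Wd N n := fun k => ω k

section
variable {N : ℕ → ℕ} {p q : (k : ℕ) → Fin (N k + 1) → ℝ}

lemma wP_congr (f : (k : ℕ) → Fin (N k + 1) → ℝ) {n : ℕ} {ω ω' : (k : ℕ) → Fin (N k + 1)}
    (h : ∀ k < n, ω k = ω' k) : wP f n ω = wP f n ω' := by
  unfold wP
  exact Finset.prod_congr rfl fun k hk => by rw [h k (Finset.mem_range.1 hk)]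

lemma lE_congr {n : ℕ} {ω ω' : (k : ℕ) → Fin (N k + 1)}
    (h : ∀ k < n, ω k = ω' k) : lE q n ω = lE q n ω' := by
  unfold lE
  refine Finset.sum_congr rfl fun k hk => ?_
  have hk := Finset.mem_range.1 hk
  rw [h k hk, wP_congr q (fun j hj => h j (hj.trans hk))]

lemma wext_apply {n : ℕ} (w : Wd N n) (k : Fin n) : wext w k = w k := by
  simp [wext]

lemma wext_wres {n : ℕ} (ω : (k : ℕ) → Fin (N k + 1)) : ∀ k < n, wext (wres n ω) k = ω k := by
  intro k hk; simp [wext, wres, hk]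

lemma wP_wext (f : (k : ℕ) → Fin (N k + 1) → ℝ) {n : ℕ} (w : Wd N n) :
    wP f n (wext w) = ∏ k : Fin n, f k (w k) := by
  unfold wP
  rw [Finset.prod_range]
  exact Finset.prod_congr rfl fun k _ => by rw [wext_apply]

lemma sum_wP (f : (k : ℕ) → Fin (N k + 1) → ℝ) (n : ℕ) :
    ∑ w : Wd N n, wP f n (wext w) = ∏ k ∈ Finset.range n, ∑ i, f k i := by
  simp_rw [wP_wext]
  rw [Finset.prod_range, Finset.prod_univ_sum]
  simp

lemma wP_nonneg {f : (k : ℕ) → Fin (N k + 1) → ℝ} (hf : ∀ k i, 0 ≤ f k i) (n : ℕ)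
    (ω : (k : ℕ) → Fin (N k + 1)) : 0 ≤ wP f n ω :=
  Finset.prod_nonneg fun k _ => hf k _

lemma sqrt_wP {f g : (k : ℕ) → Fin (N k + 1) → ℝ} (hf : ∀ k i, 0 ≤ f k i)
    (hg : ∀ k i, 0 ≤ g k i) (n : ℕ) (ω : (k : ℕ) → Fin (N k + 1)) :
    √(wP f n ω * wP g n ω) = wP (fun k i => √(f k i * g k i)) n ω := by
  unfold wP
  rw [← Finset.prod_mul_distrib]
  induction n with
  | zero => simp
  | succ n ih =>
    rw [Finset.prod_range_succ, Finset.prod_range_succ, Real.sqrt_mul, ih]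
    exact Finset.prod_nonneg fun k _ => mul_nonneg (hf _ _) (hg _ _)

lemma wP_succ (f : (k : ℕ) → Fin (N k + 1) → ℝ) (n : ℕ) (ω : (k : ℕ) → Fin (N k + 1)) :
    wP f (n+1) ω = wP f n ω * f n (ω n) := Finset.prod_range_succ _ _

lemma lE_succ (n : ℕ) (ω : (k : ℕ) → Fin (N k + 1)) :
    lE q (n+1) ω = lE q n ω + cD q n (ω n) * wP q n ω := Finset.sum_range_succ _ _

lemma cD_nonneg (hq : ∀ k i, 0 < q k i) (k : ℕ) (i : Fin (N k + 1)) : 0 ≤ cD q k i :=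
  Finset.sum_nonneg fun j _ => by split_ifs <;> [exact (hq _ _).le; exact le_rfl]

lemma cD_add (k : ℕ) (i : Fin (N k + 1)) :
    cD q k i + q k i = ∑ j : Fin (N k + 1), if (j : ℕ) ≤ (i : ℕ) then q k j else 0 := by
  have : q k i = ∑ j : Fin (N k + 1), if j = i then q k j else 0 := by simp
  rw [this, cD, ← Finset.sum_add_distrib]
  refine Finset.sum_congr rfl fun j _ => ?_
  rcases lt_trichotomy j i with h | h | h
  · have h' : (j:ℕ) < i := h
    simp [h', h'.le, h.ne]
  · simp [h]
  · have h' : (i:ℕ) < j := h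
    simp [h'.not_ge, h'.not_gt, h.ne']

lemma cD_lex (hq : ∀ k i, 0 < q k i) (k : ℕ) {i i' : Fin (N k + 1)} (h : i < i') :
    cD q k i + q k i ≤ cD q k i' := by
  rw [cD_add, cD]
  refine Finset.sum_le_sum fun j _ => ?_
  have h' : (i:ℕ) < i' := h
  have := (hq k j).le
  split_ifs <;> first | exact le_rfl | exact this | omega

lemma cD_le (hq : ∀ k i, 0 < q k i) (hqs : ∀ k, ∑ i, q k i = 1) (k : ℕ) (i : Fin (N k + 1)) :
    cD q k i + q k i ≤ 1 := by
  rw [cD_add, ← hqs k]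
  refine Finset.sum_le_sum fun j _ => ?_
  have := (hq k j).le
  split_ifs <;> first | exact le_rfl | exact this

lemma wP_pos (hq : ∀ k i, 0 < q k i) (n : ℕ) (ω : (k : ℕ) → Fin (N k + 1)) : 0 < wP q n ω :=
  Finset.prod_pos fun k _ => hq k _

lemma lE_mono (hq : ∀ k i, 0 < q k i) (ω : (k : ℕ) → Fin (N k + 1)) :
    Monotone fun n => lE q n ω := by
  refine monotone_nat_of_le_succ fun n => ?_
  rw [lE_succ]
  nlinarith [mul_nonneg (cD_nonneg hq n (ω n)) (wP_pos hq n ω).le]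

lemma rE_anti (hq : ∀ k i, 0 < q k i) (hqs : ∀ k, ∑ i, q k i = 1)
    (ω : (k : ℕ) → Fin (N k + 1)) : Antitone fun n => lE q n ω + wP q n ω := by
  refine antitone_nat_of_succ_le fun n => ?_
  rw [lE_succ, wP_succ]
  nlinarith [mul_nonneg (sub_nonneg.2 (cD_le hq hqs n (ω n))) (wP_pos hq n ω).le]

lemma lE_le_rE (hq : ∀ k i, 0 < q k i) (hqs : ∀ k, ∑ i, q k i = 1)
    (ω : (k : ℕ) → Fin (N k + 1)) (n m : ℕ) : lE q m ω ≤ lE q n ω + wP q n ω := by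
  have h1 := lE_mono hq ω (le_max_right n m)
  have h2 := rE_anti hq hqs ω (le_max_left n m)
  have h3 := wP_pos hq (max n m) ω
  simp only at h1 h2
  linarith

lemma cM_tendsto (hq : ∀ k i, 0 < q k i) (hqs : ∀ k, ∑ i, q k i = 1)
    (ω : (k : ℕ) → Fin (N k + 1)) :
    Tendsto (fun n => lE q n ω) atTop (𝓝 (codingMap N q ω)) := by
  have hs : Summable fun k => cD q k (ω k) * wP q k ω := by
    refine summable_of_sum_range_le (c := 1)
      (fun k => mul_nonneg (cD_nonneg hq k _) (wP_pos hq k ω).le) fun n => ?_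
    have := lE_le_rE hq hqs ω 0 n
    simpa [lE, wP] using this
  exact hs.hasSum.tendsto_sum_nat

lemma lE_le_cM (hq : ∀ k i, 0 < q k i) (hqs : ∀ k, ∑ i, q k i = 1)
    (n : ℕ) (ω : (k : ℕ) → Fin (N k + 1)) : lE q n ω ≤ codingMap N q ω :=
  (lE_mono hq ω).ge_of_tendsto (cM_tendsto hq hqs ω) n

lemma cM_le_rE (hq : ∀ k i, 0 < q k i) (hqs : ∀ k, ∑ i, q k i = 1)
    (n : ℕ) (ω : (k : ℕ) → Fin (N k + 1)) : codingMap N q ω ≤ lE q n ω + wP q n ω :=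
  le_of_tendsto' (cM_tendsto hq hqs ω) fun m => lE_le_rE hq hqs ω n m

lemma lex_lE (hq : ∀ k i, 0 < q k i) {k : ℕ} {ω ω' : (k : ℕ) → Fin (N k + 1)}
    (h : ∀ j < k, ω j = ω' j) (hk : ω k < ω' k) :
    lE q (k+1) ω + wP q (k+1) ω ≤ lE q (k+1) ω' := by
  rw [lE_succ, lE_succ, wP_succ, lE_congr h, wP_congr q h]
  nlinarith [mul_le_mul_of_nonneg_right (cD_lex hq k hk) (wP_pos hq k ω').le]

lemma exists_first_diff {ω ω' : (k : ℕ) → Fin (N k + 1)} {k₀ : ℕ} (h : ω k₀ ≠ ω' k₀) :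
    ∃ k ≤ k₀, (∀ j < k, ω j = ω' j) ∧ ω k ≠ ω' k := by
  classical
  have hex : ∃ k, ω k ≠ ω' k := ⟨k₀, h⟩
  refine ⟨Nat.find hex, Nat.find_min' hex h, fun j hj => ?_, Nat.find_spec hex⟩
  exact not_not.1 (Nat.find_min hex hj)

lemma cM_measurable (hq : ∀ k i, 0 < q k i) (hqs : ∀ k, ∑ i, q k i = 1) :
    Measurable (codingMap N q) := by
  refine measurable_of_tendsto_metrizable (f := fun n ω => lE q n ω) (fun n => ?_)
    (tendsto_pi_nhds.2 fun ω => cM_tendsto hq hqs ω)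
  unfold lE wP
  refine Finset.measurable_sum _ fun k _ => Measurable.mul ?_ (Finset.measurable_prod _ fun j _ => ?_)
  · exact (Measurable.of_discrete (f := cD q k)).comp (measurable_pi_apply k)
  · exact (Measurable.of_discrete (f := q j)).comp (measurable_pi_apply j)

lemma countable_tail (ω₀ : (k : ℕ) → Fin (N k + 1)) :
    {ω : (k : ℕ) → Fin (N k + 1) | ∃ n, ∀ k ≥ n, ω k = ω₀ k}.Countable := by
  rw [Set.ofPred_exists]
  refine Set.countable_iUnion fun n => Set.Finite.countable ?_
  refine Set.Finite.of_injOn (f := wres n) (t := Set.univ) (fun _ _ => Set.mem_univ _) ?_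
    Set.finite_univ
  intro ω hω ω' hω' h
  funext k
  by_cases hk : k < n
  · exact congrFun h ⟨k, hk⟩
  · rw [hω k (not_lt.1 hk), hω' k (not_lt.1 hk)]

lemma tail_zero (hq : ∀ k i, 0 < q k i) (hqs : ∀ k, ∑ i, q k i = 1)
    {ω ω' : (k : ℕ) → Fin (N k + 1)} (he : codingMap N q ω = codingMap N q ω') {k : ℕ}
    (h : ∀ j < k, ω j = ω' j) (hk : ω k < ω' k) : ∀ j ≥ k+1, ω' j = 0 := by
  have h1 := lex_lE hq h hk
  have h2 := cM_le_rE hq hqs (k+1) ω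
  intro j hj
  by_contra hne
  have h3 := lE_le_cM hq hqs (j+1) ω'
  have h4 := lE_mono hq ω' hj
  simp only at h4
  rw [lE_succ] at h3
  have h5 : q j 0 ≤ cD q j (ω' j) := by
    have := cD_lex hq j (i := 0) (i' := ω' j) (Fin.pos_iff_ne_zero.2 hne)
    linarith [cD_nonneg hq j 0]
  have h6 := mul_pos ((hq j 0).trans_le h5) (wP_pos hq j ω')
  linarith

lemma fiber_countable (hq : ∀ k i, 0 < q k i) (hqs : ∀ k, ∑ i, q k i = 1) (x : ℝ) :
    (codingMap N q ⁻¹' {x}).Countable := by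
  set Z := {ω : (k : ℕ) → Fin (N k + 1) | ∃ n, ∀ k ≥ n, ω k = (fun _ => 0 : (k : ℕ) → Fin (N k + 1)) k}
  have hZ : Z.Countable := countable_tail _
  have hs : ((codingMap N q ⁻¹' {x}) \ Z).Subsingleton := by
    rintro ω ⟨hω, hz⟩ ω' ⟨hω', hz'⟩
    have hω : codingMap N q ω = x := hω
    have hω' : codingMap N q ω' = x := hω'
    by_contra hne
    obtain ⟨k₀, hk₀⟩ := Function.ne_iff.1 hne
    obtain ⟨k, -, hk, hd⟩ := exists_first_diff hk₀
    rcases lt_or_gt_of_ne hd with hl | hl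
    · exact hz' ⟨k+1, tail_zero hq hqs (hω.trans hω'.symm) hk hl⟩
    · exact hz ⟨k+1, tail_zero hq hqs (hω'.trans hω.symm) (fun j hj => (hk j hj).symm) hl⟩
  exact (hZ.union hs.countable).mono fun ω hω => by
    by_cases h : ω ∈ Z
    · exact Or.inl h
    · exact Or.inr ⟨hω, h⟩

lemma words_disjoint (hq : ∀ k i, 0 < q k i) (hqs : ∀ k, ∑ i, q k i = 1) {n : ℕ}
    {w w' : Wd N n} (hne : w ≠ w') :
    Disjoint (Set.Ico (lE q n (wext w)) (lE q n (wext w) + wP q n (wext w)))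
      (Set.Ico (lE q n (wext w')) (lE q n (wext w') + wP q n (wext w'))) := by
  obtain ⟨k₀, hk₀⟩ := Function.ne_iff.1 hne
  rw [← wext_apply w, ← wext_apply w'] at hk₀
  obtain ⟨k, hkk, hk, hd⟩ := exists_first_diff hk₀
  have hkn : k + 1 ≤ n := by have := k₀.2; omega
  rw [Set.disjoint_left]
  rintro x ⟨hx1, hx2⟩ ⟨hx3, hx4⟩
  have key : ∀ {u v : (k : ℕ) → Fin (N k + 1)}, (∀ j < k, u j = v j) → u k < v k →
      lE q n u + wP q n u ≤ lE q n v := by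
    intro u v h1 h2
    have := lex_lE hq h1 h2
    have h3 := rE_anti hq hqs u hkn
    have h4 := lE_mono hq v hkn
    simp only at h3 h4
    linarith
  rcases lt_or_gt_of_ne hd with hl | hl
  · linarith [key hk hl]
  · linarith [key (fun j hj => (hk j hj).symm) hl]

lemma meas_words (μ : Measure ((k : ℕ) → Fin (N k + 1))) (hp : ∀ k i, 0 ≤ p k i)
    (hμ : ∀ (n : ℕ) (ω : (k : ℕ) → Fin (N k + 1)),
      μ {x | ∀ k < n, x k = ω k} = ENNReal.ofReal (∏ k ∈ Finset.range n, p k (ω k)))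
    (n : ℕ) (T : Finset (Wd N n)) :
    μ {ω | wres n ω ∈ T} ≤ ENNReal.ofReal (∑ w ∈ T, wP p n (wext w)) := by
  rw [ENNReal.ofReal_sum_of_nonneg fun w _ => wP_nonneg hp n _]
  calc μ {ω | wres n ω ∈ T} ≤ μ (⋃ w ∈ T, {x | ∀ k < n, x k = wext w k}) := by
        refine measure_mono fun ω hω => ?_
        simp only [Set.mem_iUnion]
        exact ⟨wres n ω, hω, fun k hk => (wext_wres ω k hk).symm⟩
    _ ≤ ∑ w ∈ T, μ {x | ∀ k < n, x k = wext w k} := measure_biUnion_finset_le _ _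
    _ = _ := Finset.sum_congr rfl fun w _ => hμ n _

end

/-- tails of a convergent product -/
lemma tail_prod {f : ℕ → ℝ} (h0 : ∀ k, 0 ≤ f k) (h1 : ∀ k, f k ≤ 1) {c : ℝ} (hc : 0 < c)
    (h : ∀ n, c ≤ ∏ k ∈ Finset.range n, f k) {η : ℝ} (hη : 0 < η) :
    ∃ m, ∀ n, m ≤ n → 1 - η ≤ ∏ k ∈ Finset.range n, if k < m then 1 else f k := by
  set F := fun n => ∏ k ∈ Finset.range n, f k with hF
  have hanti : Antitone F := antitone_nat_of_succ_le fun n => by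
    simp only [hF, Finset.prod_range_succ]
    exact mul_le_of_le_one_right (Finset.prod_nonneg fun k _ => h0 k) (h1 n)
  have hbdd : BddBelow (Set.range F) := ⟨c, by rintro _ ⟨n, rfl⟩; exact h n⟩
  have hlim := tendsto_atTop_ciInf hanti hbdd
  set P := ⨅ n, F n
  have hP : c ≤ P := le_ciInf h
  have hPle : ∀ n, P ≤ F n := fun n => ciInf_le hbdd n
  have hP0 : 0 < P := hc.trans_le hP
  obtain ⟨m, hm⟩ := (hlim.eventually (gt_mem_nhds (show P < P + η * P by nlinarith))).exists
  refine ⟨m, fun n hn => ?_⟩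
  have heq : F n = F m * ∏ k ∈ Finset.range n, if k < m then 1 else f k := by
    obtain ⟨d, rfl⟩ := Nat.exists_eq_add_of_le hn
    simp only [hF, Finset.prod_range_add]
    congr 1
    rw [Finset.prod_eq_one (s := Finset.range m), one_mul]
    · exact Finset.prod_congr rfl fun k _ => by simp
    · intro k hk; simp [Finset.mem_range.1 hk]
  set R := ∏ k ∈ Finset.range n, if k < m then 1 else f k
  have hPm : 0 < F m := hP0.trans_le (hPle m)
  have := hPle n
  by_contra! hlt
  nlinarith [mul_lt_mul_of_pos_left hlt hPm, hPle m]

lemma ms_of_eps {α : Type*} [MeasurableSpace α] {μ ν : Measure α}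
    (h : ∀ ε : ℝ, 0 < ε → ∃ B : Set α, MeasurableSet B ∧ μ Bᶜ ≤ ENNReal.ofReal ε ∧
      ν B ≤ ENNReal.ofReal ε) : μ.MutuallySingular ν := by
  choose B hB h1 h2 using fun n : ℕ => h ((1/2)^n) (by positivity)
  have hsum : ∑' n : ℕ, ENNReal.ofReal ((1/2:ℝ)^n) ≠ ⊤ := by
    rw [← ENNReal.ofReal_tsum_of_nonneg (fun n => by positivity) summable_geometric_two]
    exact ENNReal.ofReal_ne_top
  have hν : ν (limsup B atTop) = 0 :=
    measure_limsup_atTop_eq_zero (ne_top_of_le_ne_top hsum (ENNReal.tsum_le_tsum h2))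
  have hμ : μ (limsup (fun n => (B n)ᶜ) atTop) = 0 :=
    measure_limsup_atTop_eq_zero (ne_top_of_le_ne_top hsum (ENNReal.tsum_le_tsum h1))
  refine Measure.MutuallySingular.symm ⟨limsup B atTop, MeasurableSet.measurableSet_limsup hB, hν, ?_⟩
  refine measure_mono_null ?_ hμ
  intro x hx
  simp only [Set.mem_compl_iff, mem_limsup_iff_frequently_mem, not_frequently] at hx ⊢
  exact hx.frequently

lemma hellinger_bound {ι : Type*} [Fintype ι] {f g : ι → ℝ} (hf : ∀ i, 0 ≤ f i)
    (hg : ∀ i, 0 ≤ g i) (hfs : ∑ i, f i = 1) (hgs : ∑ i, g i = 1) {η : ℝ}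
    (h : 1 - η ≤ ∑ i, √(f i * g i)) (T : Finset ι) :
    ∑ i ∈ T, f i ≤ 2 * ∑ i ∈ T, g i + 4 * η := by
  have h1 : ∑ i ∈ T, f i ≤ ∑ i ∈ T, (2 * g i + 2 * (f i + g i - 2 * √(f i * g i))) := by
    refine Finset.sum_le_sum fun i _ => ?_
    rw [Real.sqrt_mul (hf i)]
    nlinarith [Real.sq_sqrt (hf i), Real.sq_sqrt (hg i), sq_nonneg (√(f i) - 2 * √(g i))]
  have h2 : ∑ i ∈ T, 2 * (f i + g i - 2 * √(f i * g i)) ≤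
      ∑ i, 2 * (f i + g i - 2 * √(f i * g i)) := by
    refine Finset.sum_le_sum_of_subset_of_nonneg (Finset.subset_univ _) fun i _ _ => ?_
    rw [Real.sqrt_mul (hf i)]
    nlinarith [Real.sq_sqrt (hf i), Real.sq_sqrt (hg i), sq_nonneg (√(f i) - √(g i))]
  rw [Finset.sum_add_distrib, ← Finset.mul_sum] at h1
  have h3 : ∑ i, 2 * (f i + g i - 2 * √(f i * g i)) = 2 * (1 + 1 - 2 * ∑ i, √(f i * g i)) := by
    rw [← Finset.mul_sum, Finset.sum_sub_distrib, Finset.sum_add_distrib, hfs, hgs,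
      ← Finset.mul_sum]
  linarith

lemma rho_le_one {ι : Type*} [Fintype ι] {f g : ι → ℝ} (hf : ∀ i, 0 ≤ f i)
    (hg : ∀ i, 0 ≤ g i) (hfs : ∑ i, f i = 1) (hgs : ∑ i, g i = 1) :
    ∑ i, √(f i * g i) ≤ 1 := by
  have : ∑ i, √(f i * g i) ≤ ∑ i, (f i + g i) / 2 := by
    refine Finset.sum_le_sum fun i _ => ?_
    rw [Real.sqrt_mul (hf i)]
    nlinarith [Real.sq_sqrt (hf i), Real.sq_sqrt (hg i), sq_nonneg (√(f i) - √(g i))]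
  rw [← Finset.sum_div, Finset.sum_add_distrib, hfs, hgs] at this
  linarith

section
variable {N : ℕ → ℕ} {p q : (k : ℕ) → Fin (N k + 1) → ℝ}

lemma ui_words (hp : ∀ k i, 0 ≤ p k i) (hq : ∀ k i, 0 < q k i)
    (hps : ∀ k, ∑ i, p k i = 1) (hqs : ∀ k, ∑ i, q k i = 1) {c : ℝ} (hc : 0 < c)
    (hρ : ∀ n, c ≤ ∏ k ∈ Finset.range n, ∑ i, √(p k i * q k i)) {η : ℝ} (hη : 0 < η) :
    ∃ (m : ℕ) (C : ℝ), 0 < C ∧ ∀ n, m ≤ n → ∀ T : Finset (Wd N n),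
      ∑ w ∈ T, wP p n (wext w) ≤ C * ∑ w ∈ T, wP q n (wext w) + 4 * η := by
  obtain ⟨m, hm⟩ := tail_prod (f := fun k => ∑ i, √(p k i * q k i))
    (fun k => Finset.sum_nonneg fun i _ => Real.sqrt_nonneg _)
    (fun k => rho_le_one (hp k) (fun i => (hq k i).le) (hps k) (hqs k)) hc hρ hη
  set r : (k : ℕ) → Fin (N k + 1) → ℝ := fun k i => if k < m then p k i else q k i with hr
  have hr0 : ∀ k i, 0 ≤ r k i := fun k i => by
    simp only [hr]; split_ifs <;> [exact hp k i; exact (hq k i).le]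
  have hrs : ∀ k, ∑ i, r k i = 1 := fun k => by
    by_cases h : k < m <;> simp [hr, h, hps, hqs]
  set B : ℕ → ℝ := fun k => ∑ i, (q k i)⁻¹ with hB
  have hB1 : ∀ k i, 1 ≤ B k * q k i := fun k i => by
    have : (q k i)⁻¹ ≤ B k :=
      Finset.single_le_sum (f := fun i => (q k i)⁻¹) (fun j _ => (inv_pos.2 (hq k j)).le)
        (Finset.mem_univ i)
    calc 1 = (q k i)⁻¹ * q k i := (inv_mul_cancel₀ (hq k i).ne').symm
      _ ≤ _ := by gcongr; exact (hq k i).le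
  have hBp : ∀ k, 0 < B k := fun k => by
    have := hB1 k 0
    by_contra! h
    nlinarith [hq k 0]
  have hp1 : ∀ k i, p k i ≤ 1 := fun k i => by
    rw [← hps k]; exact Finset.single_le_sum (fun j _ => hp k j) (Finset.mem_univ i)
  refine ⟨m, 2 * ∏ k ∈ Finset.range m, B k, by have := Finset.prod_pos (s := Finset.range m) fun k _ => hBp k; positivity, fun n hn T => ?_⟩
  have h1 := hellinger_bound (f := fun w : Wd N n => wP p n (wext w))
    (g := fun w : Wd N n => wP r n (wext w)) (fun w => wP_nonneg hp _ _)
    (fun w => wP_nonneg hr0 _ _) (by rw [sum_wP]; simp [hps]) (by rw [sum_wP]; simp [hrs])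
    (η := η) (by
      simp_rw [sqrt_wP hp hr0]
      rw [sum_wP]
      refine (hm n hn).trans (le_of_eq (Finset.prod_congr rfl fun k _ => ?_))
      by_cases h : k < m
      · simp [hr, h, Real.sqrt_mul_self (hp _ _), hps]
      · simp [hr, h]) T
  refine h1.trans ?_
  rw [mul_assoc]
  have h2 : ∀ ω, wP r n ω ≤ (∏ k ∈ Finset.range m, B k) * wP q n ω := fun ω => by
    obtain ⟨d, rfl⟩ := Nat.exists_eq_add_of_le hn
    unfold wP
    rw [Finset.prod_range_add, Finset.prod_range_add, ← mul_assoc, ← Finset.prod_mul_distrib]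
    have : ∀ k, r (m + k) (ω (m+k)) = q (m + k) (ω (m+k)) := fun k => by simp [hr]
    simp_rw [this]
    refine mul_le_mul_of_nonneg_right ?_ (Finset.prod_nonneg fun k _ => (hq _ _).le)
    refine Finset.prod_le_prod (fun k _ => hr0 _ _) fun k hk => ?_
    simp only [hr, Finset.mem_range.1 hk, if_true]
    exact (hp1 _ _).trans (hB1 _ _)
  have := Finset.sum_le_sum (s := T) fun w _ => h2 (wext w)
  rw [← Finset.mul_sum] at this
  linarith

lemma ac_part (μ : Measure ((k : ℕ) → Fin (N k + 1)))
    (hp : ∀ k i, 0 ≤ p k i) (hq : ∀ k i, 0 < q k i)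
    (hps : ∀ k, ∑ i, p k i = 1) (hqs : ∀ k, ∑ i, q k i = 1)
    (hmax : Tendsto (fun n => ∏ k ∈ Finset.range n, ⨆ i, q k i) atTop (nhds 0))
    (hμ : ∀ (n : ℕ) (ω : (k : ℕ) → Fin (N k + 1)),
      μ {x | ∀ k < n, x k = ω k} = ENNReal.ofReal (∏ k ∈ Finset.range n, p k (ω k)))
    {c : ℝ} (hc : 0 < c)
    (hρ : ∀ n, c ≤ ∏ k ∈ Finset.range n, ∑ i, √(p k i * q k i)) :
    Measure.map (codingMap N q) μ ≪ volume := by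
  classical
  intro S hS
  have hL : ∀ ω, Tendsto (fun n => wP q n ω) atTop (𝓝 0) := fun ω =>
    squeeze_zero (fun n => (wP_pos hq n ω).le) (fun n => Finset.prod_le_prod
      (fun k _ => (hq _ _).le) fun k _ => le_ciSup (Set.finite_range _).bddAbove (ω k)) hmax
  suffices h : ∀ η : ℝ, 0 < η → Measure.map (codingMap N q) μ S ≤ ENNReal.ofReal (5 * η) by
    refine le_antisymm (le_of_forall_gt fun a ha => ?_) zero_le
    obtain ⟨x, hx0, hxa⟩ := ENNReal.lt_iff_exists_real_btwn.1 ha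
    have hx : 0 < x := ENNReal.ofReal_pos.1 hxa.1
    refine (h (x/5) (by positivity)).trans_lt ?_
    rw [mul_div_cancel₀ _ (by norm_num)]
    exact hxa.2
  intro η hη
  obtain ⟨m, C, hC, hT⟩ := ui_words hp hq hps hqs hc hρ hη
  obtain ⟨U, hSU, hUo, hUv⟩ := Set.exists_isOpen_lt_of_lt S (μ := volume) (ENNReal.ofReal (η / C))
    (by rw [hS]; exact ENNReal.ofReal_pos.2 (by positivity))
  refine (measure_mono hSU).trans ?_
  rw [Measure.map_apply (cM_measurable hq hqs) hUo.measurableSet]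
  set V : ℕ → Set ((k : ℕ) → Fin (N k + 1)) := fun n =>
    {ω | Set.Icc (lE q n ω) (lE q n ω + wP q n ω) ⊆ U} with hV
  have hVmono : Monotone V := fun n n' hn ω hω =>
    (Set.Icc_subset_Icc (lE_mono hq ω hn) (rE_anti hq hqs ω hn)).trans hω
  have hcov : codingMap N q ⁻¹' U ⊆ ⋃ n, V n := by
    intro ω hω
    obtain ⟨ε, hε, hb⟩ := Metric.isOpen_iff.1 hUo _ hω
    obtain ⟨n, hn⟩ := ((hL ω).eventually (gt_mem_nhds hε)).exists
    refine Set.mem_iUnion.2 ⟨n, fun x hx => hb ?_⟩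
    rw [Metric.mem_ball, Real.dist_eq, abs_lt]
    have h1 := lE_le_cM hq hqs n ω
    have h2 := cM_le_rE hq hqs n ω
    constructor <;> linarith [hx.1, hx.2]
  refine (measure_mono hcov).trans ?_
  rw [hVmono.measure_iUnion]
  refine iSup_le fun n₀ => ?_
  set n := max n₀ m
  refine (measure_mono (hVmono (le_max_left n₀ m))).trans ?_
  set T : Finset (Wd N n) := Finset.univ.filter fun w =>
    Set.Icc (lE q n (wext w)) (lE q n (wext w) + wP q n (wext w)) ⊆ U with hTd
  have hVT : V n ⊆ {ω | wres n ω ∈ T} := by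
    intro ω hω
    simp only [Set.mem_ofPred_eq, hTd, Finset.mem_filter, Finset.mem_univ, true_and]
    rw [lE_congr (wext_wres ω), wP_congr q (wext_wres ω)]
    exact hω
  refine (measure_mono hVT).trans ((meas_words μ hp hμ n T).trans ?_)
  refine ENNReal.ofReal_le_ofReal ((hT n (le_max_right _ _) T).trans ?_)
  have hvol : ENNReal.ofReal (∑ w ∈ T, wP q n (wext w)) ≤ volume U := by
    rw [ENNReal.ofReal_sum_of_nonneg fun w _ => (wP_pos hq n _).le]
    calc ∑ w ∈ T, ENNReal.ofReal (wP q n (wext w))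
        = ∑ w ∈ T, volume (Set.Ico (lE q n (wext w)) (lE q n (wext w) + wP q n (wext w))) := by
          simp [Real.volume_Ico]
      _ = volume (⋃ w ∈ T, Set.Ico (lE q n (wext w)) (lE q n (wext w) + wP q n (wext w))) := by
          rw [measure_biUnion_finset]
          · intro w _ w' _ hne
            exact words_disjoint hq hqs hne
          · exact fun w _ => measurableSet_Ico
      _ ≤ volume U := by
          refine measure_mono (Set.iUnion₂_subset fun w hw => Set.Ico_subset_Icc_self.trans ?_)
          exact (Finset.mem_filter.1 hw).2
  have hlt := ((ENNReal.ofReal_lt_ofReal_iff (by positivity)).1 (hvol.trans_lt hUv)).le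
  have : C * ∑ w ∈ T, wP q n (wext w) ≤ η := by
    rwa [le_div_iff₀' hC] at hlt
  linarith

lemma ms_part (μ : Measure ((k : ℕ) → Fin (N k + 1)))
    (hp : ∀ k i, 0 ≤ p k i) (hq : ∀ k i, 0 < q k i)
    (hqs : ∀ k, ∑ i, q k i = 1)
    (hμ : ∀ (n : ℕ) (ω : (k : ℕ) → Fin (N k + 1)),
      μ {x | ∀ k < n, x k = ω k} = ENNReal.ofReal (∏ k ∈ Finset.range n, p k (ω k)))
    (hρ : ¬ ∃ c > 0, ∀ n, c ≤ ∏ k ∈ Finset.range n, ∑ i, √(p k i * q k i)) :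
    (Measure.map (codingMap N q) μ).MutuallySingular volume := by
  classical
  refine ms_of_eps fun ε hε => ?_
  push Not at hρ
  obtain ⟨n, hn⟩ := hρ ε hε
  rw [← sum_wP (fun k i => √(p k i * q k i))] at hn
  simp_rw [← sqrt_wP hp (fun k i => (hq k i).le)] at hn
  set T : Finset (Wd N n) := Finset.univ.filter fun w => wP q n (wext w) ≤ wP p n (wext w) with hT
  set I : Wd N n → Set ℝ := fun w => Set.Icc (lE q n (wext w)) (lE q n (wext w) + wP q n (wext w))
  have hBm : MeasurableSet (⋃ w ∈ T, I w) :=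
    Finset.measurableSet_biUnion _ fun w _ => measurableSet_Icc
  have hsub : ∀ T' : Finset (Wd N n), ∑ w ∈ T', √(wP p n (wext w) * wP q n (wext w)) ≤ ε := fun T' =>
    (Finset.sum_le_sum_of_subset_of_nonneg (Finset.subset_univ _)
      fun i _ _ => Real.sqrt_nonneg _).trans hn.le
  refine ⟨⋃ w ∈ T, I w, hBm, ?_, ?_⟩
  · rw [Measure.map_apply (cM_measurable hq hqs) hBm.compl]
    have : codingMap N q ⁻¹' (⋃ w ∈ T, I w)ᶜ ⊆ {ω | wres n ω ∈ Tᶜ} := by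
      intro ω hω
      simp only [Set.mem_ofPred_eq, Finset.mem_compl]
      intro hmem
      refine hω (Set.mem_iUnion₂.2 ⟨_, hmem, ?_⟩)
      simp only [I]
      rw [lE_congr (wext_wres ω), wP_congr q (wext_wres ω)]
      exact ⟨lE_le_cM hq hqs n ω, cM_le_rE hq hqs n ω⟩
    refine (measure_mono this).trans ((meas_words μ hp hμ n _).trans (ENNReal.ofReal_le_ofReal ?_))
    refine (Finset.sum_le_sum fun w hw => ?_).trans (hsub Tᶜ)
    have hlt : wP p n (wext w) < wP q n (wext w) := by
      simpa [hT] using hw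
    refine Real.le_sqrt_of_sq_le ?_
    nlinarith [wP_nonneg hp n (wext w)]
  · calc volume (⋃ w ∈ T, I w) ≤ ∑ w ∈ T, volume (I w) := measure_biUnion_finset_le _ _
      _ = ENNReal.ofReal (∑ w ∈ T, wP q n (wext w)) := by
        rw [ENNReal.ofReal_sum_of_nonneg fun w _ => (wP_pos hq n _).le]
        simp [I, Real.volume_Icc]
      _ ≤ _ := by
        refine ENNReal.ofReal_le_ofReal ((Finset.sum_le_sum fun w hw => ?_).trans (hsub T))
        have hle : wP q n (wext w) ≤ wP p n (wext w) := by simpa [hT] using hw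
        refine Real.le_sqrt_of_sq_le ?_
        nlinarith [wP_pos hq n (wext w)]

lemma noatom_part (μ : Measure ((k : ℕ) → Fin (N k + 1)))
    (hp : ∀ k i, 0 ≤ p k i) (hq : ∀ k i, 0 < q k i)
    (hqs : ∀ k, ∑ i, q k i = 1)
    (hμ : ∀ (n : ℕ) (ω : (k : ℕ) → Fin (N k + 1)),
      μ {x | ∀ k < n, x k = ω k} = ENNReal.ofReal (∏ k ∈ Finset.range n, p k (ω k)))
    (hP : ¬ ∃ c > 0, ∀ n, c ≤ ∏ k ∈ Finset.range n, ⨆ i, p k i) (x : ℝ) :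
    Measure.map (codingMap N q) μ {x} = 0 := by
  rw [Measure.map_apply (cM_measurable hq hqs) (measurableSet_singleton x)]
  rw [← Set.biUnion_of_singleton (codingMap N q ⁻¹' {x}),
    measure_biUnion_null_iff (fiber_countable hq hqs x)]
  intro ω _
  push Not at hP
  refine le_antisymm (le_of_forall_gt fun a ha => ?_) zero_le
  obtain ⟨y, hx0, hxa⟩ := ENNReal.lt_iff_exists_real_btwn.1 ha
  have hy : 0 < y := ENNReal.ofReal_pos.1 hxa.1
  obtain ⟨n, hn⟩ := hP y hy
  refine lt_of_le_of_lt ?_ hxa.2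
  calc μ {ω} ≤ μ {x | ∀ k < n, x k = ω k} := measure_mono (by rintro _ rfl k _; rfl)
    _ = _ := hμ n ω
    _ ≤ _ := ENNReal.ofReal_le_ofReal ((Finset.prod_le_prod (fun k _ => hp _ _)
      fun k _ => le_ciSup (Set.finite_range _).bddAbove (ω k)).trans hn.le)

lemma atom_part (μ : Measure ((k : ℕ) → Fin (N k + 1))) [IsProbabilityMeasure μ]
    (hp : ∀ k i, 0 ≤ p k i) (hq : ∀ k i, 0 < q k i)
    (hps : ∀ k, ∑ i, p k i = 1) (hqs : ∀ k, ∑ i, q k i = 1)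
    (hμ : ∀ (n : ℕ) (ω : (k : ℕ) → Fin (N k + 1)),
      μ {x | ∀ k < n, x k = ω k} = ENNReal.ofReal (∏ k ∈ Finset.range n, p k (ω k)))
    {c : ℝ} (hc : 0 < c) (hP : ∀ n, c ≤ ∏ k ∈ Finset.range n, ⨆ i, p k i)
    (ν : Measure ℝ) (hν : ν = Measure.map (codingMap N q) μ) :
    ν {x : ℝ | ν {x} ≠ 0} = 1 := by
  classical
  have hm := cM_measurable hq hqs
  have : IsProbabilityMeasure ν := hν ▸ Measure.isProbabilityMeasure_map hm.aemeasurable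
  choose ω₀ hω₀ using fun k => exists_eq_ciSup_of_finite (f := p k)
  have hp1 : ∀ k i, p k i ≤ 1 := fun k i => by
    rw [← hps k]; exact Finset.single_le_sum (fun j _ => hp k j) (Finset.mem_univ i)
  set A := {ω : (k : ℕ) → Fin (N k + 1) | ∃ n, ∀ k ≥ n, ω k = ω₀ k} with hA
  have hAc : A.Countable := countable_tail ω₀
  have hA0 : μ Aᶜ = 0 := by
    refine le_antisymm (le_of_forall_gt fun a ha => ?_) zero_le
    obtain ⟨η, hx0, hxa⟩ := ENNReal.lt_iff_exists_real_btwn.1 ha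
    have hη : 0 < η := ENNReal.ofReal_pos.1 hxa.1
    refine lt_of_le_of_lt ?_ hxa.2
    simp_rw [← hω₀] at hP
    obtain ⟨m, hm⟩ := tail_prod (fun k => hp k (ω₀ k)) (fun k => hp1 k _) hc hP hη
    set V : ℕ → Set ((k : ℕ) → Fin (N k + 1)) := fun n => {ω | ∃ k, m ≤ k ∧ k < n ∧ ω k ≠ ω₀ k}
    have hVm : Monotone V := fun n n' h ω ⟨k, h1, h2, h3⟩ => ⟨k, h1, h2.trans_le h, h3⟩
    have hcov : Aᶜ ⊆ ⋃ n, V n := by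
      intro ω hω
      have : ¬ ∀ k ≥ m, ω k = ω₀ k := fun h => hω ⟨m, h⟩
      push Not at this
      obtain ⟨k, hk, hne⟩ := this
      exact Set.mem_iUnion.2 ⟨k+1, k, hk, Nat.lt_succ_self k, hne⟩
    refine (measure_mono hcov).trans ?_
    rw [hVm.measure_iUnion]
    refine iSup_le fun n₀ => ?_
    set n := max n₀ m
    refine (measure_mono (hVm (le_max_left n₀ m))).trans ?_
    set G : Finset (Wd N n) := Finset.univ.filter fun w => ∀ k < n, m ≤ k → wext w k = ω₀ k with hG
    have hsub : V n ⊆ {ω | wres n ω ∈ Gᶜ} := by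
      rintro ω ⟨k, h1, h2, h3⟩
      simp only [Set.mem_ofPred_eq, Finset.mem_compl, hG, Finset.mem_filter, Finset.mem_univ,
        true_and]
      intro h
      exact h3 ((wext_wres ω k h2).symm.trans (h k h2 h1))
    refine (measure_mono hsub).trans ((meas_words μ hp hμ n _).trans (ENNReal.ofReal_le_ofReal ?_))
    have htot : ∑ w ∈ G, wP p n (wext w) + ∑ w ∈ Gᶜ, wP p n (wext w) = 1 := by
      rw [Finset.sum_add_sum_compl, sum_wP]; simp [hps]
    set f : (k : ℕ) → Fin (N k + 1) → ℝ := fun k i => if m ≤ k ∧ i ≠ ω₀ k then 0 else p k i with hf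
    have hGs : ∏ k ∈ Finset.range n, (if k < m then 1 else p k (ω₀ k)) ≤
        ∑ w ∈ G, wP p n (wext w) := by
      calc ∏ k ∈ Finset.range n, (if k < m then 1 else p k (ω₀ k))
          = ∏ k ∈ Finset.range n, ∑ i, f k i := by
            refine Finset.prod_congr rfl fun k _ => ?_
            by_cases h : k < m
            · simp [hf, h, not_le.2 h, hps]
            · simp [hf, h, not_lt.1 h, ite_not]
        _ = ∑ w : Wd N n, wP f n (wext w) := (sum_wP f n).symm
        _ = ∑ w ∈ G, wP f n (wext w) := by
            refine (Finset.sum_subset (Finset.subset_univ _) fun w _ hw => ?_).symm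
            simp only [hG, Finset.mem_filter, Finset.mem_univ, true_and] at hw
            push Not at hw
            obtain ⟨k, h1, h2, h3⟩ := hw
            exact Finset.prod_eq_zero (Finset.mem_range.2 h1) (by simp [hf, h2, h3])
        _ ≤ _ := by
            refine Finset.sum_le_sum fun w _ => Finset.prod_le_prod (fun k _ => ?_) fun k _ => ?_
            · simp only [hf]; split_ifs <;> [exact le_rfl; exact hp _ _]
            · simp only [hf]; split_ifs <;> [exact hp _ _; exact le_rfl]
    have := hm n (le_max_right _ _)
    linarith
  set E := codingMap N q '' A
  have hEc : E.Countable := hAc.image _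
  have hE0 : ν Eᶜ = 0 := by
    rw [hν, Measure.map_apply hm hEc.measurableSet.compl]
    exact measure_mono_null (fun ω hω hA' => hω ⟨ω, hA', rfl⟩) hA0
  have hZ : ν {x | x ∈ E ∧ ν {x} = 0} = 0 := by
    rw [← Set.biUnion_of_singleton {x | x ∈ E ∧ ν {x} = 0}, measure_biUnion_null_iff
      (hEc.mono fun x hx => hx.1)]
    exact fun x hx => hx.2
  have hcompl : ν {x : ℝ | ν {x} ≠ 0}ᶜ = 0 := by
    refine measure_mono_null (t := Eᶜ ∪ {x | x ∈ E ∧ ν {x} = 0}) (fun x hx => ?_)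
      (measure_union_null hE0 hZ)
    have hx : ν {x} = 0 := by simpa using hx
    by_cases h : x ∈ E
    · exact Or.inr ⟨h, hx⟩
    · exact Or.inl h
  have h := measure_eq_measure_of_null_sdiff (μ := ν) (Set.subset_univ {x : ℝ | ν {x} ≠ 0})
    (by rw [← Set.compl_eq_univ_sdiff]; exact hcompl)
  rw [h, measure_univ]

end

/-- Theorem 2: the distribution `μ_ξ` of the random variable `ξ` with independent
`Q̃`-symbols (the pushforward under the coding map of the infinite product measure
with marginals `p_{ik}`) is of pure type.  It is purely absolutely continuous iff
`ρ = ∏_k ∑_i √(p_{ik} q_{ik}) > 0`; purely atomic iff `P_max = ∏_k max_i p_{ik} > 0`;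
and purely singular continuous iff `ρ = 0 = P_max`.  (Positivity of an infinite
product of factors in `[0,1]` is expressed as the nonincreasing partial products
being bounded below by a positive constant, and its vanishing as the negation.) -/
theorem pure_type_trichotomy (N : ℕ → ℕ) (p q : (k : ℕ) → Fin (N k + 1) → ℝ)
    (μ : Measure ((k : ℕ) → Fin (N k + 1))) [IsProbabilityMeasure μ]
    (hp : ∀ k i, 0 ≤ p k i) (hq : ∀ k i, 0 < q k i)
    (hps : ∀ k, ∑ i, p k i = 1) (hqs : ∀ k, ∑ i, q k i = 1)
    (hmax : Tendsto (fun n => ∏ k ∈ Finset.range n, ⨆ i, q k i) atTop (nhds 0))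
    (hμ : ∀ (n : ℕ) (ω : (k : ℕ) → Fin (N k + 1)),
      μ {x | ∀ k < n, x k = ω k} = ENNReal.ofReal (∏ k ∈ Finset.range n, p k (ω k)))
    (μξ : Measure ℝ) (hμξ : μξ = Measure.map (codingMap N q) μ) :
    -- pure type: exactly one of the three alternatives occurs
    ((μξ ≪ volume) ∨ (μξ {x : ℝ | μξ {x} ≠ 0} = 1) ∨
      (μξ.MutuallySingular volume ∧ ∀ x : ℝ, μξ {x} = 0)) ∧
    -- 1) purely absolutely continuous iff ρ > 0
    ((μξ ≪ volume) ↔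
      ∃ c > 0, ∀ n, c ≤ ∏ k ∈ Finset.range n, ∑ i, Real.sqrt (p k i * q k i)) ∧
    -- 2) purely atomic iff P_max > 0
    ((μξ {x : ℝ | μξ {x} ≠ 0} = 1) ↔
      ∃ c > 0, ∀ n, c ≤ ∏ k ∈ Finset.range n, ⨆ i, p k i) ∧
    -- 3) purely singular continuous iff ρ = 0 = P_max
    ((μξ.MutuallySingular volume ∧ ∀ x : ℝ, μξ {x} = 0) ↔
      (¬ ∃ c > 0, ∀ n, c ≤ ∏ k ∈ Finset.range n, ∑ i, Real.sqrt (p k i * q k i)) ∧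
      (¬ ∃ c > 0, ∀ n, c ≤ ∏ k ∈ Finset.range n, ⨆ i, p k i)) := by
  have hm := cM_measurable hq hqs
  have hprob : IsProbabilityMeasure μξ := hμξ ▸ Measure.isProbabilityMeasure_map hm.aemeasurable
  set R := ∃ c > 0, ∀ n, c ≤ ∏ k ∈ Finset.range n, ∑ i, Real.sqrt (p k i * q k i) with hR
  set Q := ∃ c > 0, ∀ n, c ≤ ∏ k ∈ Finset.range n, ⨆ i, p k i with hQ
  have h1 : R → μξ ≪ volume := fun ⟨c, hc, h⟩ =>
    hμξ ▸ ac_part μ hp hq hps hqs hmax hμ hc h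
  have h2 : ¬ R → μξ.MutuallySingular volume := fun h => hμξ ▸ ms_part μ hp hq hqs hμ h
  have h3 : Q → μξ {x : ℝ | μξ {x} ≠ 0} = 1 := fun ⟨c, hc, h⟩ =>
    atom_part μ hp hq hps hqs hμ hc h μξ hμξ
  have h4 : ¬ Q → ∀ x : ℝ, μξ {x} = 0 := fun h x => hμξ ▸ noatom_part μ hp hq hqs hμ h x
  have h5 : μξ ≪ volume → ¬ μξ.MutuallySingular volume := fun ha hs =>
    IsProbabilityMeasure.ne_zero μξ
      (Measure.eq_zero_of_absolutelyContinuous_of_mutuallySingular ha hs)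
  have h6 : μξ {x : ℝ | μξ {x} ≠ 0} = 1 → ¬ ∀ x : ℝ, μξ {x} = 0 := fun ha hn => by
    simp [hn] at ha
  clear_value R Q
  tauto
end

section
/- Let s ≥ 2 and let q_0,...,q_{s-1} > 0 with ∑ q_i = 1, and let p_0,...,p_{s-1} ≥ 0 with ∑ p_i = 1. Let ξ have independent identically distributed Q-digits: P(digit k of ξ = i) = p_i in the Q-representation with ratios q_i. Then the Hausdorff dimension of the measure μ_ξ (the infimum of Hausdorff dimensions of Borel sets of full μ_ξ-measure) equals (∑_{i=0}^{s-1} p_i ln p_i)/(∑_{i=0}^{s-1} p_i ln q_i), with the convention 0·ln 0 = 0. -/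
open MeasureTheory Filter Finset Topology

/-- The coding map of the `Q`-representation with constant column proportions
`q₀, ..., q_s` (digit set `{0, ..., s}`): it sends a digit sequence `ω` to the
point `∑_k D_k L_{k-1}` of `[0,1]`, the unique point in the intersection of the
corresponding nested cylinder intervals. -/
noncomputable def codingMapC (s : ℕ) (q : Fin (s + 1) → ℝ) (ω : ℕ → Fin (s + 1)) : ℝ :=
  ∑' k : ℕ, (∑ j : Fin (s + 1), if (j : ℕ) < (ω k : ℕ) then q j else 0) *
    ∏ t ∈ Finset.range k, q (ω t)

namespace QRep

variable {s : ℕ}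

noncomputable def D (q : Fin (s + 1) → ℝ) (i : Fin (s + 1)) : ℝ :=
  ∑ j : Fin (s + 1), if (j : ℕ) < (i : ℕ) then q j else 0

noncomputable def P (q : Fin (s + 1) → ℝ) (n : ℕ) (ω : ℕ → Fin (s + 1)) : ℝ :=
  ∏ t ∈ Finset.range n, q (ω t)

noncomputable def A (q : Fin (s + 1) → ℝ) (n : ℕ) (ω : ℕ → Fin (s + 1)) : ℝ :=
  ∑ k ∈ Finset.range n, D q (ω k) * P q k ω

lemma D_nonneg {q : Fin (s + 1) → ℝ} (hq : ∀ i, 0 < q i) (i) : 0 ≤ D q i :=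
  Finset.sum_nonneg fun j _ => by split_ifs <;> simp [(hq j).le]

lemma D_add_eq (q : Fin (s + 1) → ℝ) (i : Fin (s + 1)) :
    D q i + q i = ∑ j : Fin (s + 1), if (j : ℕ) ≤ (i : ℕ) then q j else 0 := by
  have : q i = ∑ j : Fin (s + 1), if j = i then q j else 0 := by simp
  conv_lhs => rw [this]
  rw [D, ← Finset.sum_add_distrib]
  refine Finset.sum_congr rfl fun j _ => ?_
  rcases lt_trichotomy (j : ℕ) (i : ℕ) with h | h | h
  · have : j ≠ i := by rintro rfl; omega
    simp [h, h.le, this]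
  · have : j = i := Fin.ext h
    simp [this]
  · have : j ≠ i := by rintro rfl; omega
    have h1 : ¬ (j : ℕ) < i := by omega
    have h2 : ¬ (j : ℕ) ≤ i := by omega
    simp only [h1, h2, this, if_false, add_zero]

lemma D_add_le_one {q : Fin (s + 1) → ℝ} (hq : ∀ i, 0 < q i) (hqsum : ∑ i, q i = 1) (i) :
    D q i + q i ≤ 1 := by
  rw [D_add_eq, ← hqsum]
  refine Finset.sum_le_sum fun j _ => ?_
  split_ifs <;> simp [(hq j).le]

lemma D_add_le {q : Fin (s + 1) → ℝ} (hq : ∀ i, 0 < q i) {i k : Fin (s + 1)} (h : i < k) :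
    D q i + q i ≤ D q k := by
  rw [D_add_eq, D]
  refine Finset.sum_le_sum fun j _ => ?_
  have h' : (i : ℕ) < k := h
  split_ifs
  · rfl
  · omega
  · exact (hq j).le
  · rfl

lemma P_succ (q : Fin (s + 1) → ℝ) (n ω) : P q (n + 1) ω = P q n ω * q (ω n) :=
  Finset.prod_range_succ _ _

lemma A_succ (q : Fin (s + 1) → ℝ) (n ω) : A q (n + 1) ω = A q n ω + D q (ω n) * P q n ω :=
  Finset.sum_range_succ _ _

lemma P_pos {q : Fin (s + 1) → ℝ} (hq : ∀ i, 0 < q i) (n ω) : 0 < P q n ω :=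
  Finset.prod_pos fun _ _ => hq _

lemma P_nonneg {q : Fin (s + 1) → ℝ} (hq : ∀ i, 0 ≤ q i) (n ω) : 0 ≤ P q n ω :=
  Finset.prod_nonneg fun _ _ => hq _

lemma A_mono {q : Fin (s + 1) → ℝ} (hq : ∀ i, 0 < q i) (ω) : Monotone fun n => A q n ω :=
  monotone_nat_of_le_succ fun n => by
    have := mul_nonneg (D_nonneg hq (ω n)) (P_pos hq n ω).le
    simp only [A_succ]; linarith

lemma AP_anti {q : Fin (s + 1) → ℝ} (hq : ∀ i, 0 < q i) (hqsum : ∑ i, q i = 1) (ω) :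
    Antitone fun n => A q n ω + P q n ω :=
  antitone_nat_of_succ_le fun n => by
    have := mul_le_mul_of_nonneg_right (D_add_le_one hq hqsum (ω n)) (P_pos hq n ω).le
    simp only [A_succ, P_succ]; linarith

lemma term_nonneg {q : Fin (s + 1) → ℝ} (hq : ∀ i, 0 < q i) (ω) (k : ℕ) :
    0 ≤ D q (ω k) * P q k ω := mul_nonneg (D_nonneg hq (ω k)) (P_pos hq k ω).le

lemma A_le_one {q : Fin (s + 1) → ℝ} (hq : ∀ i, 0 < q i) (hqsum : ∑ i, q i = 1) (n ω) :
    A q n ω ≤ 1 := by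
  have h := AP_anti hq hqsum ω (Nat.zero_le n)
  have := P_pos hq n ω
  simp only [A, P, Finset.range_zero, Finset.sum_empty, Finset.prod_empty] at h this ⊢
  linarith

lemma summ {q : Fin (s + 1) → ℝ} (hq : ∀ i, 0 < q i) (hqsum : ∑ i, q i = 1) (ω) :
    Summable fun k => D q (ω k) * P q k ω :=
  summable_of_sum_range_le (term_nonneg hq ω) (fun n => A_le_one hq hqsum n ω)

lemma le_pi {q : Fin (s + 1) → ℝ} (hq : ∀ i, 0 < q i) (hqsum : ∑ i, q i = 1) (n ω) :
    A q n ω ≤ codingMapC s q ω :=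
  (summ hq hqsum ω).sum_le_tsum _ (fun k _ => term_nonneg hq ω k)

lemma pi_le {q : Fin (s + 1) → ℝ} (hq : ∀ i, 0 < q i) (hqsum : ∑ i, q i = 1) (n ω) :
    codingMapC s q ω ≤ A q n ω + P q n ω := by
  have h := (summ hq hqsum ω).hasSum.tendsto_sum_nat
  refine le_of_tendsto h (eventually_atTop.2 ⟨n, fun m hm => ?_⟩)
  have h1 := AP_anti hq hqsum ω hm
  have h2 := P_pos hq m ω
  simp only [A] at h1 ⊢
  linarith

lemma P_congr (q : Fin (s + 1) → ℝ) {n} {ω ω' : ℕ → Fin (s + 1)} (h : ∀ k < n, ω k = ω' k) :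
    P q n ω = P q n ω' :=
  Finset.prod_congr rfl fun k hk => by rw [h k (Finset.mem_range.1 hk)]

lemma A_congr (q : Fin (s + 1) → ℝ) {n} {ω ω' : ℕ → Fin (s + 1)} (h : ∀ k < n, ω k = ω' k) :
    A q n ω = A q n ω' :=
  Finset.sum_congr rfl fun k hk => by
    have hk' := Finset.mem_range.1 hk
    rw [h k hk', P_congr q fun j hj => h j (hj.trans hk')]

lemma sep {q : Fin (s + 1) → ℝ} (hq : ∀ i, 0 < q i) (hqsum : ∑ i, q i = 1)
    {ω ω' : ℕ → Fin (s + 1)} {k n m : ℕ} (hk : ∀ j < k, ω j = ω' j) (hlt : ω k < ω' k)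
    (hn : k < n) (hm : k < m) : A q n ω + P q n ω ≤ A q m ω' := by
  have h1 := AP_anti hq hqsum ω (show k + 1 ≤ n from hn)
  have h2 := A_mono hq ω' (show k + 1 ≤ m from hm)
  have h3 := mul_le_mul_of_nonneg_right (D_add_le hq hlt) (P_pos hq k ω).le
  simp only [A_succ, P_succ] at h1 h2
  rw [← A_congr q hk, ← P_congr q hk] at h2
  linarith

lemma exists_min (q : Fin (s + 1) → ℝ) (hq : ∀ i, 0 < q i) (hqsum : ∑ i, q i = 1) :
    ∃ a, 0 < a ∧ a ≤ 1 ∧ ∀ i, a ≤ q i := by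
  obtain ⟨i, hi⟩ := Finite.exists_min q
  refine ⟨q i, hq i, ?_, hi⟩
  rw [← hqsum]
  exact Finset.single_le_sum (fun j _ => (hq j).le) (Finset.mem_univ i)

lemma exists_max (hs : 1 ≤ s) (q : Fin (s + 1) → ℝ) (hq : ∀ i, 0 < q i) (hqsum : ∑ i, q i = 1) :
    ∃ a, 0 < a ∧ a < 1 ∧ ∀ i, q i ≤ a := by
  obtain ⟨i, hi⟩ := Finite.exists_max q
  refine ⟨q i, hq i, ?_, hi⟩
  have : Nontrivial (Fin (s + 1)) := Fin.nontrivial_iff_two_le.2 (by omega)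
  obtain ⟨j, hj⟩ := exists_ne i
  have := Finset.add_le_sum (f := q) (s := Finset.univ) (fun j _ => (hq j).le)
    (Finset.mem_univ i) (Finset.mem_univ j) hj.symm
  have := hq j
  linarith

lemma P_le_pow {q : Fin (s + 1) → ℝ} (hq : ∀ i, 0 < q i) {a : ℝ} (ha : ∀ i, q i ≤ a) (n ω) :
    P q n ω ≤ a ^ n := by
  have := Finset.prod_le_prod (s := Finset.range n) (fun k _ => (hq (ω k)).le)
    (fun k _ => ha (ω k))
  simpa [P] using this

lemma pow_le_P {q : Fin (s + 1) → ℝ} {a : ℝ} (ha0 : 0 < a) (ha : ∀ i, a ≤ q i) (n ω) :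
    a ^ n ≤ P q n ω := by
  have := Finset.prod_le_prod (s := Finset.range n) (fun k _ => ha0.le)
    (fun k _ => ha (ω k))
  simpa [P] using this

lemma P_cont (q : Fin (s + 1) → ℝ) (n) : Continuous (P q n) :=
  continuous_finsetProd _ fun k _ => continuous_of_discreteTopology.comp (continuous_apply k)

lemma pi_cont (hs : 1 ≤ s) {q : Fin (s + 1) → ℝ} (hq : ∀ i, 0 < q i) (hqsum : ∑ i, q i = 1) :
    Continuous (codingMapC s q) := by
  obtain ⟨a, ha0, ha1, ha⟩ := exists_max hs q hq hqsum
  refine continuous_tsum (u := fun n => a ^ n) (f := fun k ω => D q (ω k) * P q k ω) (fun k => ?_)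
    (summable_geometric_of_lt_one ha0.le ha1) (fun k ω => ?_)
  · have h : Continuous fun ω : ℕ → Fin (s + 1) => D q (ω k) :=
      (continuous_of_discreteTopology (f := D q)).comp (continuous_apply k)
    exact h.mul (P_cont q k)
  · rw [Real.norm_of_nonneg (term_nonneg hq ω k)]
    have h1 := D_add_le_one hq hqsum (ω k)
    have h2 := hq (ω k)
    have h3 := P_pos hq k ω
    have h4 := P_le_pow hq ha k ω
    nlinarith

open ProbabilityTheory in
lemma mu_eq {p : Fin (s + 1) → ℝ} (hp : ∀ i, 0 ≤ p i) (hpsum : ∑ i, p i = 1)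
    (μ : Measure (ℕ → Fin (s + 1))) [IsProbabilityMeasure μ]
    (hμ : ∀ (n : ℕ) (ω : ℕ → Fin (s + 1)),
      μ {x | ∀ k < n, x k = ω k} = ENNReal.ofReal (∏ k ∈ Finset.range n, p (ω k))) :
    ∃ ν : PMF (Fin (s + 1)), (∀ i, ν i = ENNReal.ofReal (p i)) ∧
      μ = Measure.infinitePi (fun _ : ℕ => ν.toMeasure) := by
  have hsum : ∑ i, ENNReal.ofReal (p i) = 1 := by
    rw [← ENNReal.ofReal_sum_of_nonneg fun i _ => hp i, hpsum, ENNReal.ofReal_one]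
  refine ⟨PMF.ofFintype (fun i => ENNReal.ofReal (p i)) hsum, fun i => rfl, ?_⟩
  set ν := PMF.ofFintype (fun i => ENNReal.ofReal (p i)) hsum
  let C : Set (Set (ℕ → Fin (s + 1))) := {S | ∃ (n : ℕ) (ω : ℕ → Fin (s + 1)), S = {x | ∀ k < n, x k = ω k}}
  have hmeas : ∀ (n : ℕ) (ω : ℕ → Fin (s + 1)), MeasurableSet {x : ℕ → Fin (s + 1) | ∀ k < n, x k = ω k} := by
    intro n ω
    have : {x : ℕ → Fin (s + 1) | ∀ k < n, x k = ω k} = ⋂ k, ⋂ (_ : k < n), (fun x => x k) ⁻¹' {ω k} := by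
      ext x; simp
    rw [this]
    exact MeasurableSet.iInter fun k => MeasurableSet.iInter fun _ =>
      measurable_pi_apply k (measurableSet_singleton _)
  refine ext_of_generate_finite C (le_antisymm ?_ ?_) ?_ ?_ (by simp)
  · refine iSup_le fun k => ?_
    rw [← measurable_iff_comap_le]
    refine @measurable_to_countable' _ _ _ _ (MeasurableSpace.generateFrom C) _ fun a => ?_
    have : (fun x : ℕ → Fin (s + 1) => x k) ⁻¹' {a} =
        ⋃ w : {w : Fin (k + 1) → Fin (s + 1) // w (Fin.last k) = a},
          {x | ∀ j < k + 1, x j = (fun i => if h : i < k + 1 then w.1 ⟨i, h⟩ else 0) j} := by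
      ext x
      simp only [Set.mem_preimage, Set.mem_singleton_iff, Set.mem_iUnion, Set.mem_ofPred_eq]
      constructor
      · intro h
        exact ⟨⟨fun i => x i, h⟩, fun j hj => by simp [hj]⟩
      · rintro ⟨⟨w, hw⟩, h⟩
        rw [h k (Nat.lt_succ_self k)]
        simpa [Fin.last] using hw
    rw [this]
    exact MeasurableSet.iUnion fun w => MeasurableSpace.measurableSet_generateFrom ⟨_, _, rfl⟩
  · refine MeasurableSpace.generateFrom_le ?_
    rintro _ ⟨n, ω, rfl⟩
    exact hmeas n ω
  · have key : ∀ (n m : ℕ) (ω ω' : ℕ → Fin (s + 1)), n ≤ m →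
        ({x : ℕ → Fin (s + 1) | ∀ k < n, x k = ω k} ∩ {x | ∀ k < m, x k = ω' k}).Nonempty →
        {x : ℕ → Fin (s + 1) | ∀ k < n, x k = ω k} ∩ {x | ∀ k < m, x k = ω' k} = {x | ∀ k < m, x k = ω' k} := by
      rintro n m ω ω' hnm ⟨y, hy1, hy2⟩
      refine Set.inter_eq_right.2 fun x hx k hk => ?_
      rw [hx k (hk.trans_le hnm), ← hy2 k (hk.trans_le hnm), hy1 k hk]
    rintro _ ⟨n, ω, rfl⟩ _ ⟨m, ω', rfl⟩ hne
    rcases le_total n m with h | h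
    · rw [key _ _ _ _ h hne]; exact ⟨_, _, rfl⟩
    · rw [Set.inter_comm] at hne ⊢
      rw [key _ _ _ _ h hne]; exact ⟨_, _, rfl⟩
  · rintro _ ⟨n, ω, rfl⟩
    rw [hμ]
    have : {x : ℕ → Fin (s + 1) | ∀ k < n, x k = ω k} = Set.pi (Finset.range n : Finset ℕ) (fun k => {ω k}) := by
      ext x; simp [Set.mem_pi]
    rw [this, Measure.infinitePi_pi _ (fun i _ => measurableSet_singleton _),
      ENNReal.ofReal_prod_of_nonneg fun i _ => hp _]
    refine Finset.prod_congr rfl fun k _ => ?_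
    rw [PMF.toMeasure_apply_singleton _ _ (measurableSet_singleton _)]
    rfl

open ProbabilityTheory in
lemma slln {p : Fin (s + 1) → ℝ} (hp : ∀ i, 0 ≤ p i) (hpsum : ∑ i, p i = 1)
    (μ : Measure (ℕ → Fin (s + 1))) [IsProbabilityMeasure μ]
    (hμ : ∀ (n : ℕ) (ω : ℕ → Fin (s + 1)),
      μ {x | ∀ k < n, x k = ω k} = ENNReal.ofReal (∏ k ∈ Finset.range n, p (ω k)))
    (f : Fin (s + 1) → ℝ) (hf : ∑ i, p i * f i < 0) :
    ∀ᵐ ω ∂μ, (∀ k, 0 < p (ω k)) ∧ ∃ m, ∀ n ≥ m, ∑ k ∈ Finset.range n, f (ω k) ≤ 0 := by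
  obtain ⟨ν, hν, rfl⟩ := mu_eq hp hpsum μ hμ
  have hfm : Measurable f := measurable_of_finite f
  have hpos : ∀ᵐ ω ∂(Measure.infinitePi (fun _ : ℕ => ν.toMeasure)), ∀ k, 0 < p (ω k) := by
    refine ae_all_iff.2 fun k => ?_
    have h1 : ∀ᵐ i ∂ν.toMeasure, 0 < p i := by
      rw [ae_iff_of_countable]
      intro i hi
      rw [PMF.toMeasure_apply_singleton _ _ (measurableSet_singleton _), hν] at hi
      by_contra h
      exact hi (ENNReal.ofReal_of_nonpos (not_lt.1 h))
    rw [← Measure.infinitePi_map_eval (fun _ : ℕ => ν.toMeasure) k] at h1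
    exact ae_of_ae_map (measurable_pi_apply k).aemeasurable h1
  have hind := iIndepFun_infinitePi (P := fun _ : ℕ => ν.toMeasure) (X := fun _ => f) (fun _ => hfm)
  have hid : ∀ i : ℕ, IdentDistrib (fun ω : ℕ → Fin (s + 1) => f (ω i)) (fun ω => f (ω 0))
      (Measure.infinitePi (fun _ : ℕ => ν.toMeasure)) (Measure.infinitePi (fun _ : ℕ => ν.toMeasure)) := by
    intro i
    have : IdentDistrib (fun ω : ℕ → Fin (s + 1) => ω i) (fun ω => ω 0)
      (Measure.infinitePi (fun _ : ℕ => ν.toMeasure)) (Measure.infinitePi (fun _ : ℕ => ν.toMeasure)) :=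
      ⟨(measurable_pi_apply i).aemeasurable, (measurable_pi_apply 0).aemeasurable, by
        rw [Measure.infinitePi_map_eval, Measure.infinitePi_map_eval]⟩
    exact this.comp hfm
  have hint : Integrable (fun ω : ℕ → Fin (s + 1) => f (ω 0)) (Measure.infinitePi (fun _ : ℕ => ν.toMeasure)) :=
    (measurePreserving_eval_infinitePi (fun _ : ℕ => ν.toMeasure) 0).integrable_comp_of_integrable
      (g := f) .of_finite
  have hE : ∫ ω, f (ω 0) ∂(Measure.infinitePi (fun _ : ℕ => ν.toMeasure)) = ∑ i, p i * f i := by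
    have := integral_map (μ := Measure.infinitePi (fun _ : ℕ => ν.toMeasure)) (φ := fun ω => ω 0)
      (measurable_pi_apply 0).aemeasurable (f := f) hfm.aestronglyMeasurable
    rw [← this, Measure.infinitePi_map_eval, PMF.integral_eq_sum]
    refine Finset.sum_congr rfl fun i _ => ?_
    rw [hν, ENNReal.toReal_ofReal (hp i), smul_eq_mul]
  have hlln := strong_law_ae_real (fun k (ω : ℕ → Fin (s + 1)) => f (ω k)) hint
    (fun i j hij => hind.indepFun hij) hid
  filter_upwards [hpos, hlln] with ω h1 h2
  refine ⟨h1, ?_⟩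
  rw [hE] at h2
  obtain ⟨m, hm⟩ := eventually_atTop.1 (h2.eventually (gt_mem_nhds hf))
  refine ⟨m, fun n hn => ?_⟩
  by_contra h
  exact absurd (hm n hn) (not_lt.2 (div_nonneg (not_le.1 h).le (Nat.cast_nonneg n)))

lemma log_P {q : Fin (s + 1) → ℝ} {ω} (hq : ∀ k, 0 < q (ω k)) (n) :
    Real.log (P q n ω) = ∑ k ∈ Finset.range n, Real.log (q (ω k)) :=
  Real.log_prod fun k _ => (hq k).ne'

lemma upper_meas (hs : 1 ≤ s) {p q : Fin (s + 1) → ℝ}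
    (hq : ∀ i, 0 < q i) (hqsum : ∑ i, q i = 1)
    (hp : ∀ i, 0 ≤ p i) (hpsum : ∑ i, p i = 1) {t : ℝ} (ht : 0 < t) (m : ℕ) :
    Measure.hausdorffMeasure t
      (codingMapC s q '' {ω | ∀ n ≥ m, (P q n ω) ^ t ≤ P p n ω}) ≤ 1 := by
  obtain ⟨a, ha0, ha1, ha⟩ := exists_max hs q hq hqsum
  set B := {ω | ∀ n ≥ m, (P q n ω) ^ t ≤ P p n ω}
  have hdiam : ∀ (n : ℕ) (ω : ℕ → Fin (s + 1)),
      Metric.ediam (codingMapC s q '' {x | x ∈ B ∧ ∀ k < n, x k = ω k}) ≤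
        ENNReal.ofReal (P q n ω) := by
    intro n ω
    have : codingMapC s q '' {x | x ∈ B ∧ ∀ k < n, x k = ω k} ⊆
        Set.Icc (A q n ω) (A q n ω + P q n ω) := by
      rintro _ ⟨x, ⟨-, hx⟩, rfl⟩
      rw [← A_congr q hx, ← P_congr q hx]
      exact ⟨le_pi hq hqsum n x, pi_le hq hqsum n x⟩
    refine (Metric.ediam_mono this).trans ?_
    rw [Real.ediam_Icc]
    simp
  have hw : ∀ (n : ℕ) (w : Fin n → Fin (s + 1)) (x : ℕ → Fin (s + 1)), (∀ k : Fin n, x k = w k) →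
      {x | x ∈ B ∧ ∀ k : Fin n, x k = w k} = {y | y ∈ B ∧ ∀ k < n, y k = x k} := by
    intro n w x hx
    ext y
    refine and_congr_right fun _ => ⟨fun h k hk => ?_, fun h k => ?_⟩
    · rw [h ⟨k, hk⟩, ← hx ⟨k, hk⟩]
    · rw [← hx k]; exact h k k.2
  refine (Measure.hausdorffMeasure_le_liminf_sum (ι := fun n : ℕ => Fin n → Fin (s + 1))
    t _ (l := atTop) (fun n => ENNReal.ofReal (a ^ n)) ?_
    (fun n w => codingMapC s q '' {x | x ∈ B ∧ ∀ k : Fin n, x k = w k}) ?_ ?_).trans ?_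
  · rw [← ENNReal.ofReal_zero]
    exact ENNReal.tendsto_ofReal (tendsto_pow_atTop_nhds_zero_of_lt_one ha0.le ha1)
  · refine Eventually.of_forall fun n w => ?_
    rcases Set.eq_empty_or_nonempty {x | x ∈ B ∧ ∀ k : Fin n, x k = w k} with h | ⟨x, -, hx⟩
    · rw [h]; simp
    · rw [hw n w x hx]
      exact (hdiam n x).trans (ENNReal.ofReal_le_ofReal (P_le_pow hq ha n x))
  · refine Eventually.of_forall fun n => ?_
    rintro _ ⟨x, hx, rfl⟩
    exact Set.mem_iUnion.2 ⟨fun k => x k, x, ⟨hx, fun k => rfl⟩, rfl⟩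
  · refine liminf_le_of_frequently_le' (Eventually.frequently ?_)
    refine eventually_atTop.2 ⟨m, fun n hn => ?_⟩
    calc ∑ w : Fin n → Fin (s + 1), Metric.ediam (codingMapC s q '' {x | x ∈ B ∧ ∀ k : Fin n, x k = w k}) ^ t
        ≤ ∑ w : Fin n → Fin (s + 1), ENNReal.ofReal (∏ k : Fin n, p (w k)) := by
          refine Finset.sum_le_sum fun w _ => ?_
          rcases Set.eq_empty_or_nonempty {x | x ∈ B ∧ ∀ k : Fin n, x k = w k} with h | ⟨x, hxB, hx⟩
          · rw [h]; simp [ht]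
          · rw [hw n w x hx]
            have h1 : ∏ k : Fin n, p (w k) = P p n x := by
              rw [P, Finset.prod_range]
              exact Finset.prod_congr rfl fun k _ => by rw [hx]
            rw [h1]
            refine (ENNReal.rpow_le_rpow (hdiam n x) ht.le).trans ?_
            rw [ENNReal.ofReal_rpow_of_nonneg (P_pos hq n x).le ht.le]
            exact ENNReal.ofReal_le_ofReal (hxB n hn)
      _ = 1 := by
          rw [← ENNReal.ofReal_sum_of_nonneg fun w _ => Finset.prod_nonneg fun k _ => hp _]
          have := Finset.prod_univ_sum (fun _ : Fin n => (Finset.univ : Finset (Fin (s + 1)))) (fun _ i => p i)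
          rw [Fintype.piFinset_univ] at this
          rw [← this]
          simp [hpsum]

lemma lower_ball (hs : 1 ≤ s) {p q : Fin (s + 1) → ℝ}
    (hq : ∀ i, 0 < q i) (hqsum : ∑ i, q i = 1)
    (μ : Measure (ℕ → Fin (s + 1)))
    (hμ : ∀ (n : ℕ) (ω : ℕ → Fin (s + 1)),
      μ {x | ∀ k < n, x k = ω k} = ENNReal.ofReal (∏ k ∈ Finset.range n, p (ω k)))
    {t : ℝ} (ht : 0 < t) (m : ℕ) {a : ℝ} (ha0 : 0 < a) (ha1 : a ≤ 1) (ha : ∀ i, a ≤ q i)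
    {r : ℝ} (hr : 0 < r) (hrm : r < a ^ m) (u : ℝ) :
    μ (codingMapC s q ⁻¹' Metric.closedBall u r ∩ {ω | ∀ n ≥ m, P p n ω ≤ (P q n ω) ^ t}) ≤
      ((⌊3 / a⌋₊ + 1 : ℕ) : ENNReal) * ENNReal.ofReal (r ^ t) := by
  classical
  obtain ⟨b, hb0, hb1, hb⟩ := exists_max hs q hq hqsum
  -- stopping time
  have hst : ∀ ω, ∃ n, m ≤ n ∧ P q n ω ≤ r ∧ a * r < P q n ω := by
    intro ω
    have hex : ∃ n, P q n ω ≤ r := by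
      obtain ⟨n, hn⟩ := exists_pow_lt_of_lt_one hr hb1
      exact ⟨n, (P_le_pow hq hb n ω).trans hn.le⟩
    have hmn : m < Nat.find hex := by
      rw [Nat.lt_find_iff]
      intro n hn h
      have h1 := pow_le_P ha0 ha n ω
      have h2 := pow_le_pow_of_le_one ha0.le ha1 hn
      linarith
    refine ⟨Nat.find hex, hmn.le, Nat.find_spec hex, ?_⟩
    obtain ⟨j, hj⟩ : ∃ j, Nat.find hex = j + 1 := ⟨Nat.find hex - 1, by omega⟩
    have h1 : r < P q j ω := not_le.1 (Nat.find_min hex (by omega))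
    rw [hj, P_succ]
    have := ha (ω j)
    nlinarith
  choose N hNm hNr hNa using hst
  set X := codingMapC s q ⁻¹' Metric.closedBall u r ∩ {ω | ∀ n ≥ m, P p n ω ≤ (P q n ω) ^ t}
  let g : (ℕ → Fin (s + 1)) → ℝ := fun ω => (A q (N ω) ω - (u - 2 * r)) / (a * r)
  have har : 0 < a * r := mul_pos ha0 hr
  have hg0 : ∀ ω ∈ X, 0 ≤ g ω := by
    rintro ω ⟨h, -⟩
    rw [Set.mem_preimage, Real.closedBall_eq_Icc] at h
    have := pi_le hq hqsum (N ω) ω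
    have := hNr ω
    exact div_nonneg (by linarith [h.1]) har.le
  have hg1 : ∀ ω ∈ X, g ω ≤ 3 / a := by
    rintro ω ⟨h, -⟩
    rw [Set.mem_preimage, Real.closedBall_eq_Icc] at h
    have := le_pi hq hqsum (N ω) ω
    rw [div_le_div_iff₀ har ha0]
    nlinarith [h.2]
  have hsame : ∀ ω ∈ X, ∀ ω' ∈ X, ⌊g ω⌋₊ = ⌊g ω'⌋₊ → N ω ≤ N ω' → ∀ k < N ω, ω k = ω' k := by
    intro ω hω ω' hω' hfl hN
    by_contra hcon
    push Not at hcon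
    have hk := Nat.find_spec hcon
    have hmin : ∀ j < Nat.find hcon, ω j = ω' j := by
      intro j hj
      by_contra h
      exact Nat.find_min hcon hj ⟨hj.trans hk.1, h⟩
    set k := Nat.find hcon
    have hnot : ∀ x ∈ X, ∀ y ∈ X, ⌊g x⌋₊ = ⌊g y⌋₊ →
        A q (N x) x + P q (N x) x ≤ A q (N y) y → False := by
      intro x hx y hy hxy h
      have h1 : g x + 1 ≤ g y := by
        have := hNa x
        simp only [g]
        rw [div_add_one har.ne']
        exact div_le_div_of_nonneg_right (by linarith) har.le
      have h2 := Nat.floor_le (hg0 x hx)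
      have h3 := Nat.lt_floor_add_one (g y)
      rw [hxy] at h2
      linarith
    rcases lt_or_gt_of_ne hk.2 with h | h
    · exact hnot ω hω ω' hω' hfl (sep hq hqsum hmin h hk.1 (hk.1.trans_le hN))
    · exact hnot ω' hω' ω hω hfl.symm
        (sep hq hqsum (fun j hj => (hmin j hj).symm) h (hk.1.trans_le hN) hk.1)
  have hcov : X ⊆ ⋃ j ∈ Finset.range (⌊3 / a⌋₊ + 1), {ω ∈ X | ⌊g ω⌋₊ = j} := by
    intro ω hω
    simp only [Set.mem_iUnion, Finset.mem_range]
    exact ⟨⌊g ω⌋₊, Nat.lt_succ_of_le (Nat.floor_le_floor (hg1 ω hω)), hω, rfl⟩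
  have hone : ∀ j, μ {ω ∈ X | ⌊g ω⌋₊ = j} ≤ ENNReal.ofReal (r ^ t) := by
    intro j
    rcases Set.eq_empty_or_nonempty {ω ∈ X | ⌊g ω⌋₊ = j} with h | h
    · rw [h]; simp
    · obtain ⟨ω, ⟨hωX, hωj⟩, hmin⟩ := exists_minimalFor_of_wellFoundedLT
        (fun ω => ω ∈ {ω ∈ X | ⌊g ω⌋₊ = j}) N h
      have hsub : {ω ∈ X | ⌊g ω⌋₊ = j} ⊆ {x | ∀ k < N ω, x k = ω k} := by
        rintro x ⟨hxX, hxj⟩ k hk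
        have hle : N ω ≤ N x := by
          rcases le_total (N ω) (N x) with h | h
          · exact h
          · exact hmin ⟨hxX, hxj⟩ h
        exact (hsame ω hωX x hxX (hωj.trans hxj.symm) hle k hk).symm
      refine (measure_mono hsub).trans ?_
      rw [hμ]
      refine ENNReal.ofReal_le_ofReal ((hωX.2 (N ω) (hNm ω)).trans ?_)
      exact Real.rpow_le_rpow (P_pos hq _ _).le (hNr ω) ht.le
  calc μ X ≤ ∑ j ∈ Finset.range (⌊3 / a⌋₊ + 1), μ {ω ∈ X | ⌊g ω⌋₊ = j} :=
        (measure_mono hcov).trans (measure_biUnion_finset_le _ _)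
    _ ≤ ∑ j ∈ Finset.range (⌊3 / a⌋₊ + 1), ENNReal.ofReal (r ^ t) :=
        Finset.sum_le_sum fun j _ => hone j
    _ = _ := by rw [Finset.sum_const, Finset.card_range, nsmul_eq_mul]

lemma closed_P {f g : ℕ → (ℕ → Fin (s + 1)) → ℝ} (hf : ∀ n, Continuous (f n))
    (hg : ∀ n, Continuous (g n)) (m : ℕ) : IsClosed {ω | ∀ n ≥ m, f n ω ≤ g n ω} := by
  simp only [Set.ofPred_forall]
  exact isClosed_iInter fun n => isClosed_iInter fun _ => isClosed_le (hf n) (hg n)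

lemma Pt_cont {q : Fin (s + 1) → ℝ} {t : ℝ} (ht : 0 < t) (n : ℕ) :
    Continuous fun ω => (P q n ω) ^ t :=
  (P_cont q n).rpow_const fun _ => Or.inr ht.le

lemma lower_meas (hs : 1 ≤ s) {p q : Fin (s + 1) → ℝ}
    (hq : ∀ i, 0 < q i) (hqsum : ∑ i, q i = 1)
    (μ : Measure (ℕ → Fin (s + 1)))
    (hμ : ∀ (n : ℕ) (ω : ℕ → Fin (s + 1)),
      μ {x | ∀ k < n, x k = ω k} = ENNReal.ofReal (∏ k ∈ Finset.range n, p (ω k)))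
    {t : ℝ} (ht : 0 < t) (m : ℕ)
    (hm : μ {ω | ∀ n ≥ m, P p n ω ≤ (P q n ω) ^ t} ≠ 0)
    {E : Set ℝ} (hE : MeasurableSet E) (hμE : ∀ᵐ ω ∂μ, codingMapC s q ω ∈ E) :
    Measure.hausdorffMeasure t E ≠ 0 := by
  obtain ⟨a, ha0, ha1, ha⟩ := exists_min q hq hqsum
  have hc := pi_cont hs hq hqsum
  set B := {ω | ∀ n ≥ m, P p n ω ≤ (P q n ω) ^ t}
  have hB : MeasurableSet B := (closed_P (P_cont p) (Pt_cont ht) m).measurableSet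
  set K : ENNReal := ((⌊3 / a⌋₊ + 1 : ℕ) : ENNReal)
  have hK0 : K ≠ 0 := by simp [K]
  have hKt : K ≠ ⊤ := ENNReal.natCast_ne_top _
  set ν := (μ.restrict B).map (codingMapC s q)
  have ham : 0 < a ^ m := pow_pos ha0 m
  have hle : K⁻¹ • ν ≤ Measure.hausdorffMeasure t := by
    refine Measure.le_hausdorffMeasure t _ (ENNReal.ofReal (a ^ m / 2)) (by simpa using ham) ?_
    intro U hU
    rcases Set.eq_empty_or_nonempty U with rfl | ⟨u, hu⟩
    · simp
    have hUt : Metric.ediam U ≠ ⊤ := ne_top_of_le_ne_top ENNReal.ofReal_ne_top hU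
    set d := (Metric.ediam U).toReal
    have hd0 : 0 ≤ d := ENNReal.toReal_nonneg
    have hdU : Metric.ediam U = ENNReal.ofReal d := (ENNReal.ofReal_toReal hUt).symm
    have hdm : d < a ^ m := by
      rw [hdU, ENNReal.ofReal_le_ofReal_iff (by positivity)] at hU
      linarith
    have hr : ∀ r, d < r → r < a ^ m → ν U ≤ K * ENNReal.ofReal (r ^ t) := by
      intro r h1 h2
      have hsub : U ⊆ Metric.closedBall u r := by
        intro x hx
        rw [Metric.mem_closedBall, ← ENNReal.ofReal_le_ofReal_iff (by linarith), ← edist_dist]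
        exact (Metric.edist_le_ediam_of_mem hx hu).trans (hdU ▸ ENNReal.ofReal_le_ofReal h1.le)
      refine (measure_mono hsub).trans ?_
      rw [Measure.map_apply hc.measurable measurableSet_closedBall,
        Measure.restrict_apply (hc.measurable measurableSet_closedBall)]
      exact lower_ball hs hq hqsum μ hμ ht m ha0 ha1 ha (hd0.trans_lt h1) h2 u
    have hlim : ν U ≤ K * ENNReal.ofReal (d ^ t) := by
      have h1 : Tendsto (fun r : ℝ => K * ENNReal.ofReal (r ^ t)) (𝓝[>] d)
          (𝓝 (K * ENNReal.ofReal (d ^ t))) := by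
        refine ENNReal.Tendsto.const_mul (ENNReal.tendsto_ofReal ?_) (Or.inr hKt)
        exact ((Real.continuousAt_rpow_const d t (Or.inr ht.le)).tendsto).mono_left nhdsWithin_le_nhds
      refine ge_of_tendsto h1 ?_
      filter_upwards [Ioo_mem_nhdsGT hdm] with r hr'
      exact hr r hr'.1 hr'.2
    rw [Measure.smul_apply, smul_eq_mul, hdU, ENNReal.ofReal_rpow_of_nonneg hd0 ht.le]
    calc K⁻¹ * ν U ≤ K⁻¹ * (K * ENNReal.ofReal (d ^ t)) := by gcongr
      _ = _ := by rw [← mul_assoc, ENNReal.inv_mul_cancel hK0 hKt, one_mul]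
  have hνE : ν E = μ B := by
    rw [Measure.map_apply hc.measurable hE, Measure.restrict_apply (hc.measurable hE)]
    refine measure_congr ?_
    filter_upwards [hμE] with ω hω
    exact propext ⟨fun h => h.2, fun h => ⟨hω, h⟩⟩
  intro h0
  have := hle E
  rw [h0, Measure.smul_apply, smul_eq_mul, hνE, nonpos_iff_eq_zero, mul_eq_zero] at this
  rcases this with h | h
  · exact hKt (ENNReal.inv_eq_zero.1 h)
  · exact hm h

lemma sum_log_q_neg (hs : 1 ≤ s) {p q : Fin (s + 1) → ℝ}
    (hq : ∀ i, 0 < q i) (hqsum : ∑ i, q i = 1)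
    (hp : ∀ i, 0 ≤ p i) (hpsum : ∑ i, p i = 1) : ∑ i, p i * Real.log (q i) < 0 := by
  obtain ⟨b, hb0, hb1, hb⟩ := exists_max hs q hq hqsum
  calc ∑ i, p i * Real.log (q i) ≤ ∑ i, p i * Real.log b :=
        Finset.sum_le_sum fun i _ => mul_le_mul_of_nonneg_left (Real.log_le_log (hq i) (hb i)) (hp i)
    _ = Real.log b := by rw [← Finset.sum_mul, hpsum, one_mul]
    _ < 0 := Real.log_neg hb0 hb1

end QRep

open QRep

/-- Theorem 4 (dimension formula): for the random variable `ξ` with i.i.d.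
`Q`-digits, `P(ξ_k = i) = p_i`, in the `Q`-representation with constant ratios
`q_i`, the Hausdorff dimension of the distribution `μ_ξ` — the infimum of the
Hausdorff dimensions of Borel sets of full `μ_ξ`-measure — equals
`(∑ p_i ln p_i) / (∑ p_i ln q_i)` (with `0 · ln 0 = 0`; note `Real.log 0 = 0`). -/
theorem dimH_of_measure (s : ℕ) (hs : 1 ≤ s) (p q : Fin (s + 1) → ℝ)
    (hq : ∀ i, 0 < q i) (hqsum : ∑ i, q i = 1)
    (hp : ∀ i, 0 ≤ p i) (hpsum : ∑ i, p i = 1)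
    (μ : Measure (ℕ → Fin (s + 1))) [IsProbabilityMeasure μ]
    (hμ : ∀ (n : ℕ) (ω : ℕ → Fin (s + 1)),
      μ {x | ∀ k < n, x k = ω k} = ENNReal.ofReal (∏ k ∈ Finset.range n, p (ω k)))
    (μξ : Measure ℝ) (hμξ : μξ = Measure.map (codingMapC s q) μ) :
    (⨅ (E : Set ℝ) (_ : MeasurableSet E ∧ μξ E = 1), dimH E) =
      ENNReal.ofReal ((∑ i, p i * Real.log (p i)) / (∑ i, p i * Real.log (q i))) := by
  have hL := sum_log_q_neg hs hq hqsum hp hpsum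
  have hc := pi_cont hs hq hqsum
  set H := ∑ i, p i * Real.log (p i)
  set L := ∑ i, p i * Real.log (q i)
  have hH : H ≤ 0 := by
    refine Finset.sum_nonpos fun i _ => mul_nonpos_of_nonneg_of_nonpos (hp i)
      (Real.log_nonpos (hp i) ?_)
    rw [← hpsum]
    exact Finset.single_le_sum (fun j _ => hp j) (Finset.mem_univ i)
  have hd0 : 0 ≤ H / L := div_nonneg_of_nonpos hH hL.le
  have hsum : ∀ t : ℝ, ∑ i, p i * (t * Real.log (q i) - Real.log (p i)) = t * L - H := by
    intro t
    simp only [H, L, Finset.mul_sum, ← Finset.sum_sub_distrib]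
    exact Finset.sum_congr rfl fun i _ => by ring
  have hsum' : ∀ t : ℝ, ∑ i, p i * (Real.log (p i) - t * Real.log (q i)) = H - t * L := by
    intro t
    simp only [H, L, Finset.mul_sum, ← Finset.sum_sub_distrib]
    exact Finset.sum_congr rfl fun i _ => by ring
  apply le_antisymm
  · refine le_of_forall_gt fun c hc' => ?_
    obtain ⟨t, ht1, ht2⟩ := ENNReal.lt_iff_exists_nnreal_btwn.1 hc'
    refine lt_of_le_of_lt ?_ ht2
    have htd : H / L < (t : ℝ) := by
      rw [← ENNReal.ofReal_coe_nnreal] at ht1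
      exact (ENNReal.ofReal_lt_ofReal_iff_of_nonneg hd0).1 ht1
    have ht : 0 < (t : ℝ) := hd0.trans_lt htd
    have hneg : ∑ i, p i * ((t : ℝ) * Real.log (q i) - Real.log (p i)) < 0 := by
      rw [hsum]
      rw [div_lt_iff_of_neg hL] at htd
      linarith
    let B : ℕ → Set (ℕ → Fin (s + 1)) := fun m => {ω | ∀ n ≥ m, (P q n ω) ^ (t : ℝ) ≤ P p n ω}
    have hBc : ∀ m, IsClosed (B m) := fun m => closed_P (Pt_cont ht) (P_cont p) m
    have hae : ∀ᵐ ω ∂μ, ∃ m, ω ∈ B m := by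
      filter_upwards [slln hp hpsum μ hμ _ hneg] with ω hω
      obtain ⟨hpos, m, hm⟩ := hω
      refine ⟨m, fun n hn => ?_⟩
      have h1 := hm n hn
      rw [Finset.sum_sub_distrib, ← Finset.mul_sum, ← log_P (fun k => hq (ω k)), ← log_P hpos] at h1
      have hPp : 0 < P p n ω := Finset.prod_pos fun k _ => hpos k
      rw [← Real.log_le_log_iff (Real.rpow_pos_of_pos (P_pos hq n ω) _) hPp,
        Real.log_rpow (P_pos hq n ω)]
      linarith
    have hEm : MeasurableSet (⋃ m, codingMapC s q '' B m) :=
      MeasurableSet.iUnion fun m => ((hBc m).isCompact.image hc).isClosed.measurableSet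
    refine (iInf₂_le (⋃ m, codingMapC s q '' B m) ⟨hEm, ?_⟩).trans ?_
    rotate_left
    · rw [hμξ, Measure.map_apply hc.measurable hEm, ← mem_ae_iff_prob_eq_one (hc.measurable hEm)]
      filter_upwards [hae] with ω hω
      obtain ⟨m, hm⟩ := hω
      exact Set.mem_iUnion.2 ⟨m, ω, hm, rfl⟩
    · rw [dimH_iUnion]
      refine iSup_le fun m => dimH_le_of_hausdorffMeasure_ne_top ?_
      exact ne_top_of_le_ne_top ENNReal.one_ne_top (upper_meas hs hq hqsum hp hpsum ht m)
  · refine le_iInf₂ fun E hE => ?_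
    obtain ⟨hEm, hE1⟩ := hE
    refine le_of_forall_lt fun c hc' => ?_
    obtain ⟨t, ht1, ht2⟩ := ENNReal.lt_iff_exists_nnreal_btwn.1 hc'
    refine lt_of_lt_of_le ht1 (le_dimH_of_hausdorffMeasure_ne_zero ?_)
    have ht : 0 < (t : ℝ) := by
      have := pos_of_gt ht1
      exact_mod_cast this
    have htd : (t : ℝ) < H / L := by
      rw [← ENNReal.ofReal_coe_nnreal] at ht2
      exact (ENNReal.ofReal_lt_ofReal_iff_of_nonneg ht.le).1 ht2
    have hneg : ∑ i, p i * (Real.log (p i) - (t : ℝ) * Real.log (q i)) < 0 := by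
      rw [hsum']
      rw [lt_div_iff_of_neg hL] at htd
      linarith
    let B : ℕ → Set (ℕ → Fin (s + 1)) := fun m => {ω | ∀ n ≥ m, P p n ω ≤ (P q n ω) ^ (t : ℝ)}
    have hae : ∀ᵐ ω ∂μ, ω ∈ ⋃ m, B m := by
      filter_upwards [slln hp hpsum μ hμ _ hneg] with ω hω
      obtain ⟨hpos, m, hm⟩ := hω
      refine Set.mem_iUnion.2 ⟨m, fun n hn => ?_⟩
      have h1 := hm n hn
      rw [Finset.sum_sub_distrib, ← Finset.mul_sum, ← log_P (fun k => hq (ω k)), ← log_P hpos] at h1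
      have hPp : 0 < P p n ω := Finset.prod_pos fun k _ => hpos k
      rw [← Real.log_le_log_iff hPp (Real.rpow_pos_of_pos (P_pos hq n ω) _),
        Real.log_rpow (P_pos hq n ω)]
      linarith
    have hne : μ (⋃ m, B m) ≠ 0 := by
      rw [measure_eq_measure_of_null_sdiff (Set.subset_univ _) (by
        rw [← Set.compl_eq_univ_sdiff]; exact hae), measure_univ]
      exact one_ne_zero
    obtain ⟨m, hm⟩ := exists_measure_pos_of_not_measure_iUnion_null hne
    refine lower_meas hs hq hqsum μ hμ ht m hm.ne' hEm ?_
    rw [hμξ, Measure.map_apply hc.measurable hEm,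
      ← mem_ae_iff_prob_eq_one (hc.measurable hEm)] at hE1
    exact hE1
end
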